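/- arXiv:1909.06193 — 3 statements merged into one kernel-verified Lean document; each statement's English description precedes it below -/
import Mathlib

section
/- (Lemma 1, torus version.) Given two Borel probability measures μ and ν on Q^d with Fourier–Stieltjes transforms f_μ and f_ν, one has W̃₁(μ,ν)² ≤ Σ_{m ∈ ℤ^d, m ≠ 0} |f_μ(m) − f_ν(m)|² / |m|². -/
open MeasureTheory Real ENNReal

noncomputable section

/-- The cube `Q^d = (−π, π]^d`. -/
def Qcube (d : ℕ) : Set (Fin d → ℝ) := {x | ∀ i, x i ∈ Set.Ioc (-π) π}

/-- The one-dimensional torus distance on `(−π,π]`. -/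
def rhoCircle (s t : ℝ) : ℝ := min |s - t| (2 * π - |s - t|)

/-- The geodesic distance on the torus `Q^d = (−π,π]^d`. -/
def rhoTorus {d : ℕ} (x y : Fin d → ℝ) : ℝ :=
  Real.sqrt (∑ i, rhoCircle (x i) (y i) ^ 2)

/-- `γ` is a coupling of `μ` and `ν`. -/
def IsCoupling {α : Type*} [MeasurableSpace α]
    (γ : Measure (α × α)) (μ ν : Measure α) : Prop :=
  γ.map Prod.fst = μ ∧ γ.map Prod.snd = ν

/-- Optimal transport cost for a cost function `c`. -/
def transportCost {α : Type*} [MeasurableSpace α] (c : α → α → ℝ)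
    (μ ν : Measure α) : ℝ≥0∞ :=
  ⨅ (γ : Measure (α × α)) (_ : IsCoupling γ μ ν),
    ∫⁻ p, ENNReal.ofReal (c p.1 p.2) ∂γ

/-- Torus Kantorovich distance `W̃₁`. -/
def W1tilde {d : ℕ} (μ ν : Measure (Fin d → ℝ)) : ℝ≥0∞ := transportCost rhoTorus μ ν

/-- Fourier–Stieltjes transform `f_μ(m) = ∫ e^{i⟨m,x⟩} dμ(x)`, `m ∈ ℤ^d`. -/
def fourierStieltjes {d : ℕ} (μ : Measure (Fin d → ℝ)) (m : Fin d → ℤ) : ℂ :=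
  ∫ x, Complex.exp (Complex.I * ∑ i, (m i : ℂ) * (x i : ℂ)) ∂μ

/-!
By Kantorovich–Rubinstein duality it suffices to bound `∫ u ∂μ - ∫ u ∂ν` for `u` Lipschitz on the
flat torus. Convolving `u` with a nonnegative trigonometric kernel of mass one, concentrated near
the origin, changes `u` by little and preserves its Lipschitz constant, so `u` may be taken to be a
trigonometric polynomial. Its gradient is then bounded by the Lipschitz constant, Parseval's
identity turns this into a bound on `∑ |m|² |û(m)|²`, and Cauchy–Schwarz concludes. The duality
itself comes from M. Riesz's extension theorem for positive functionals and the
Riesz–Markov–Kakutani representation theorem.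
-/

section TransportCost

variable {α β : Type*} [MeasurableSpace α] [MeasurableSpace β]

lemma transportCost_le_lintegral {γ : Measure (α × α)} {μ ν : Measure α} (hγ : IsCoupling γ μ ν)
    (c : α → α → ℝ) : transportCost c μ ν ≤ ∫⁻ p, ENNReal.ofReal (c p.1 p.2) ∂γ :=
  iInf₂_le γ hγ

lemma transportCost_mono {c c' : α → α → ℝ} (h : ∀ x y, c x y ≤ c' x y) (μ ν : Measure α) :
    transportCost c μ ν ≤ transportCost c' μ ν :=
  iInf₂_mono fun _ _ => lintegral_mono fun p => ENNReal.ofReal_le_ofReal (h p.1 p.2)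

lemma transportCost_map_le {f : α → β} (hf : Measurable f) {c : β → β → ℝ}
    (hc : Measurable fun p : β × β => c p.1 p.2) (μ ν : Measure α) :
    transportCost c (μ.map f) (ν.map f) ≤ transportCost (fun x y => c (f x) (f y)) μ ν := by
  have hff : Measurable (Prod.map f f) := hf.prodMap hf
  refine le_iInf₂ fun γ ⟨hμ, hν⟩ => ?_
  have coupling : IsCoupling (γ.map (Prod.map f f)) (μ.map f) (ν.map f) := by
    constructor
    · rw [← hμ, Measure.map_map measurable_fst hff, Measure.map_map hf measurable_fst,
        Prod.map_fst']
    · rw [← hν, Measure.map_map measurable_snd hff, Measure.map_map hf measurable_snd,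
        Prod.map_snd']
  calc transportCost c (μ.map f) (ν.map f)
      ≤ ∫⁻ p, ENNReal.ofReal (c p.1 p.2) ∂γ.map (Prod.map f f) :=
        transportCost_le_lintegral coupling c
    _ = ∫⁻ p, ENNReal.ofReal (c (f p.1) (f p.2)) ∂γ := lintegral_map hc.ennreal_ofReal hff

end TransportCost

section Duality

variable {X : Type*} [TopologicalSpace X]

/-- The linear map `(φ, ψ) ↦ φ ⊕ ψ`, where `(φ ⊕ ψ) (x, y) = φ x + ψ y`; its values are the
functions whose integral against a coupling depends only on the marginals. -/
def separatedSum : C(X, ℝ) × C(X, ℝ) →ₗ[ℝ] C(X × X, ℝ) :=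
  (ContinuousMap.compRightAlgHom ℝ ℝ ContinuousMap.fst).toLinearMap.coprod
    (ContinuousMap.compRightAlgHom ℝ ℝ ContinuousMap.snd).toLinearMap

@[simp]
lemma separatedSum_apply (φ ψ : C(X, ℝ)) (p : X × X) :
    separatedSum (φ, ψ) p = φ p.1 + ψ p.2 := rfl

variable [CompactSpace X] [MeasurableSpace X] [BorelSpace X]

lemma exists_measure_integral_eq_of_nonneg [T2Space X] (Λ : C(X, ℝ) →ₗ[ℝ] ℝ)
    (hΛ : ∀ f : C(X, ℝ), 0 ≤ f → 0 ≤ Λ f) :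
    ∃ γ : Measure X, IsFiniteMeasure γ ∧ ∀ f : C(X, ℝ), ∫ x, f x ∂γ = Λ f := by
  let Λc : CompactlySupportedContinuousMap X ℝ →ₚ[ℝ] ℝ :=
    PositiveLinearMap.mk₀
      { toFun f := Λ f.toContinuousMap
        map_add' f g := map_add Λ f.toContinuousMap g.toContinuousMap
        map_smul' a f := map_smul Λ a f.toContinuousMap }
      fun f hf => hΛ f.toContinuousMap hf
  have : (RealRMK.rieszMeasure Λc).Regular := RealRMK.regular_rieszMeasure Λc
  exact ⟨RealRMK.rieszMeasure Λc, inferInstance, fun f =>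
    RealRMK.integral_rieszMeasure Λc (CompactlySupportedContinuousMap.continuousMapEquiv f)⟩

lemma integrable_of_continuous {E : Type*} [NormedAddCommGroup E] (μ : Measure X)
    [IsFiniteMeasure μ] {f : X → E} (hf : Continuous f) : Integrable f μ :=
  hf.integrable_of_hasCompactSupport (.of_compactSpace _)

/-- Integration against a finite measure on a compact space, as a linear functional on the
continuous functions. -/
def integralLinearMap (μ : Measure X) [IsFiniteMeasure μ] : C(X, ℝ) →ₗ[ℝ] ℝ where
  toFun f := ∫ x, f x ∂μ
  map_add' f g :=
    integral_add (integrable_of_continuous μ f.continuous) (integrable_of_continuous μ g.continuous)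
  map_smul' a f := integral_const_mul a f

lemma integral_separatedSum (μ ν : Measure X) [IsProbabilityMeasure μ] [IsProbabilityMeasure ν]
    (φ ψ : C(X, ℝ)) :
    ∫ p, separatedSum (φ, ψ) p ∂μ.prod ν = ∫ x, φ x ∂μ + ∫ y, ψ y ∂ν := by
  simp only [separatedSum_apply]
  rw [integral_add ((integrable_of_continuous μ φ.continuous).comp_fst ν)
    ((integrable_of_continuous ν ψ.continuous).comp_snd μ)]
  simp [integral_fun_fst, integral_fun_snd]

lemma isCoupling_of_forall_integral_separatedSum [T2Space X] [SecondCountableTopology X]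
    {γ : Measure (X × X)} [IsFiniteMeasure γ] {μ ν : Measure X} [IsFiniteMeasure μ]
    [IsFiniteMeasure ν] (hγ : ∀ φ ψ : C(X, ℝ),
      ∫ p, separatedSum (φ, ψ) p ∂γ = ∫ x, φ x ∂μ + ∫ y, ψ y ∂ν) :
    IsCoupling γ μ ν := by
  constructor <;> refine ext_of_forall_integral_eq_of_IsFiniteMeasure fun f => ?_
  · rw [integral_map measurable_fst.aemeasurable f.continuous.aestronglyMeasurable]
    simpa using hγ f.toContinuousMap 0
  · rw [integral_map measurable_snd.aemeasurable f.continuous.aestronglyMeasurable]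
    simpa using hγ 0 f.toContinuousMap

variable {μ ν : Measure X} [IsProbabilityMeasure μ] [IsProbabilityMeasure ν]

lemma integral_add_integral_nonneg_of_dual_le {c : C(X × X, ℝ)} {K s : ℝ}
    (hK : ∀ φ ψ : C(X, ℝ), (∀ x y, φ x + ψ y ≤ c (x, y)) → ∫ x, φ x ∂μ + ∫ y, ψ y ∂ν ≤ K)
    (hs : 0 ≤ s) {φ ψ : C(X, ℝ)} (h : ∀ x y, s * (K - c (x, y)) ≤ φ x + ψ y) :
    0 ≤ ∫ x, φ x ∂μ + ∫ y, ψ y ∂ν := by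
  rcases hs.eq_or_lt with rfl | hs
  · rw [← integral_separatedSum]
    exact integral_nonneg fun p => by simpa using h p.1 p.2
  · have admissible (x y) : (K - s⁻¹ * φ x) + -(s⁻¹ * ψ y) ≤ c (x, y) := by
      have := mul_le_mul_of_nonneg_left (h x y) (inv_nonneg.2 hs.le)
      rw [inv_mul_cancel_left₀ hs.ne'] at this
      linarith
    have dual_le := hK (.const X K - s⁻¹ • φ) (-(s⁻¹ • ψ)) admissible
    have hφ : ∫ x, (K - s⁻¹ * φ x) ∂μ = K - s⁻¹ * ∫ x, φ x ∂μ := by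
      rw [integral_sub (integrable_const K)
        ((integrable_of_continuous μ φ.continuous).const_mul _), integral_const_mul]
      simp
    have hψ : ∫ y, -(s⁻¹ * ψ y) ∂ν = -(s⁻¹ * ∫ y, ψ y ∂ν) := by
      rw [integral_neg, integral_const_mul]
    have : K - s⁻¹ * ∫ x, φ x ∂μ + -(s⁻¹ * ∫ y, ψ y ∂ν) ≤ K := by
      rw [← hφ, ← hψ]
      exact dual_le
    exact nonneg_of_mul_nonneg_right (by linarith) (inv_pos.2 hs)

variable [SecondCountableTopology X]

/- The functional to be extended is `φ ⊕ ψ ↦ ∫ φ ∂μ + ∫ ψ ∂ν`. As it is the restriction of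
integration against `μ ⊗ ν`, it is well defined; the cone generated by the nonnegative functions
and `K - c` encodes both positivity and the bound on the cost. -/
lemma exists_nonneg_linearMap_of_dual_le {c : C(X × X, ℝ)} {K : ℝ}
    (hK : ∀ φ ψ : C(X, ℝ), (∀ x y, φ x + ψ y ≤ c (x, y)) → ∫ x, φ x ∂μ + ∫ y, ψ y ∂ν ≤ K) :
    ∃ Λ : C(X × X, ℝ) →ₗ[ℝ] ℝ, (∀ f, 0 ≤ f → 0 ≤ Λ f) ∧
      (∀ φ ψ, Λ (separatedSum (φ, ψ)) = ∫ x, φ x ∂μ + ∫ y, ψ y ∂ν) ∧ Λ c ≤ K := by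
  let cone : PointedCone ℝ C(X × X, ℝ) :=
    PointedCone.positive ℝ C(X × X, ℝ) ⊔ PointedCone.hull ℝ {.const (X × X) K - c}
  let I : C(X × X, ℝ) →ₗ.[ℝ] ℝ :=
    ⟨LinearMap.range separatedSum, (integralLinearMap (μ.prod ν)).domRestrict _⟩
  obtain ⟨Λ, hΛI, hΛ⟩ := riesz_extension cone I
    (by
      rintro ⟨_, ⟨φ, ψ⟩, rfl⟩ hmem
      obtain ⟨f, hf, g, hg, hfg⟩ := Submodule.mem_sup.1 hmem
      obtain ⟨s, rfl⟩ := Submodule.mem_span_singleton.1 hg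
      refine (integral_add_integral_nonneg_of_dual_le hK s.2 fun x y => ?_).trans_eq
        (integral_separatedSum μ ν φ ψ).symm
      have hfxy : 0 ≤ f (x, y) := hf (x, y)
      have hsum : f (x, y) + s * (K - c (x, y)) = φ x + ψ y := DFunLike.congr_fun hfg (x, y)
      linarith)
    (fun f => ⟨⟨_, (.const X ‖f‖, 0), rfl⟩, Submodule.mem_sup_left fun p => by
      have : -‖f‖ ≤ f p := neg_le_of_abs_le (f.norm_coe_le_norm p)
      simpa using neg_le_iff_add_nonneg'.1 this⟩)
  have marginals (φ ψ) : Λ (separatedSum (φ, ψ)) = ∫ x, φ x ∂μ + ∫ y, ψ y ∂ν :=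
    (hΛI ⟨_, (φ, ψ), rfl⟩).trans (integral_separatedSum μ ν φ ψ)
  refine ⟨Λ, fun f hf => hΛ f (Submodule.mem_sup_left hf), marginals, ?_⟩
  have hconst : Λ (.const (X × X) K) = K := by
    have : separatedSum (.const X K, 0) = .const (X × X) K := by ext; simp
    rw [← this, marginals]
    simp
  have := hΛ _ (Submodule.mem_sup_right (Submodule.mem_span_singleton_self _))
  rw [map_sub, hconst] at this
  exact sub_nonneg.1 this

variable [T2Space X]

theorem transportCost_le_of_forall_add_le {c : X → X → ℝ}
    (hc : Continuous fun p : X × X => c p.1 p.2) (hc_nonneg : ∀ x y, 0 ≤ c x y) {K : ℝ}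
    (hK : ∀ φ ψ : C(X, ℝ), (∀ x y, φ x + ψ y ≤ c x y) → ∫ x, φ x ∂μ + ∫ y, ψ y ∂ν ≤ K) :
    transportCost c μ ν ≤ ENNReal.ofReal K := by
  obtain ⟨Λ, Λ_nonneg, Λ_marginals, Λ_cost⟩ := exists_nonneg_linearMap_of_dual_le (c := ⟨_, hc⟩) hK
  obtain ⟨γ, hγ, hγΛ⟩ := exists_measure_integral_eq_of_nonneg Λ Λ_nonneg
  have coupling : IsCoupling γ μ ν :=
    isCoupling_of_forall_integral_separatedSum fun φ ψ => (hγΛ _).trans (Λ_marginals φ ψ)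
  calc transportCost c μ ν ≤ ∫⁻ p, ENNReal.ofReal (c p.1 p.2) ∂γ :=
        transportCost_le_lintegral coupling c
    _ = ENNReal.ofReal (∫ p, c p.1 p.2 ∂γ) :=
      (ofReal_integral_eq_lintegral_ofReal (integrable_of_continuous γ hc)
        (.of_forall fun p => hc_nonneg p.1 p.2)).symm
    _ ≤ ENNReal.ofReal K := ENNReal.ofReal_le_ofReal ((hγΛ ⟨_, hc⟩).trans_le Λ_cost)

end Duality

section KantorovichRubinstein

variable {X : Type*} {c : X → X → ℝ}

/-- The `c`-transform of a potential `ψ`: the largest `φ` satisfying `φ x + ψ y ≤ c x y`. -/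
def cTransform (c : X → X → ℝ) (ψ : X → ℝ) (x : X) : ℝ := ⨅ y, (c x y - ψ y)

lemma le_cTransform [Nonempty X] {φ ψ : X → ℝ} {x : X} (h : ∀ y, φ x + ψ y ≤ c x y) :
    φ x ≤ cTransform c ψ x :=
  le_ciInf fun y => le_sub_iff_add_le.2 (h y)

variable [TopologicalSpace X]

lemma continuous_of_forall_sub_le (hc : Continuous fun p : X × X => c p.1 p.2)
    (hc_self : ∀ x, c x x = 0) {u : X → ℝ} (hu : ∀ x y, u x - u y ≤ c x y) : Continuous u := by
  refine continuous_iff_continuousAt.2 fun x => ?_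
  have lower : Filter.Tendsto (fun y => u x - c x y) (nhds x) (nhds (u x)) := by
    have : Continuous fun y => u x - c x y := by fun_prop
    simpa [hc_self] using this.tendsto x
  have upper : Filter.Tendsto (fun y => u x + c y x) (nhds x) (nhds (u x)) := by
    have : Continuous fun y => u x + c y x := by fun_prop
    simpa [hc_self] using this.tendsto x
  exact tendsto_of_tendsto_of_tendsto_of_le_of_le lower upper
    (fun y => by linarith [hu x y]) (fun y => by linarith [hu y x])

variable [CompactSpace X]

lemma cTransform_le (hc : Continuous fun p : X × X => c p.1 p.2) (ψ : C(X, ℝ)) (x y : X) :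
    cTransform c ψ x ≤ c x y - ψ y := by
  have : Continuous fun y => c x y - ψ y := by fun_prop
  exact ciInf_le (isCompact_range this).bddBelow y

lemma cTransform_sub_le (hc : Continuous fun p : X × X => c p.1 p.2)
    (hc_triangle : ∀ x y z, c x z ≤ c x y + c y z) (ψ : C(X, ℝ)) (x y : X) :
    cTransform c ψ x - cTransform c ψ y ≤ c x y := by
  have : Nonempty X := ⟨x⟩
  rw [sub_le_comm]
  exact le_ciInf fun z => by linarith [cTransform_le hc ψ x z, hc_triangle x y z]

variable [MeasurableSpace X] [BorelSpace X] [SecondCountableTopology X] [T2Space X]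

theorem transportCost_le_of_forall_sub_le {μ ν : Measure X} [IsProbabilityMeasure μ]
    [IsProbabilityMeasure ν] (hc : Continuous fun p : X × X => c p.1 p.2)
    (hc_nonneg : ∀ x y, 0 ≤ c x y) (hc_self : ∀ x, c x x = 0)
    (hc_triangle : ∀ x y z, c x z ≤ c x y + c y z) {K : ℝ}
    (hK : ∀ u : C(X, ℝ), (∀ x y, u x - u y ≤ c x y) → ∫ x, u x ∂μ - ∫ x, u x ∂ν ≤ K) :
    transportCost c μ ν ≤ ENNReal.ofReal K := by
  have : Nonempty X := nonempty_of_isProbabilityMeasure μ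
  refine transportCost_le_of_forall_add_le hc hc_nonneg fun φ ψ hφψ => ?_
  have hu := cTransform_sub_le hc hc_triangle ψ
  let u : C(X, ℝ) := ⟨cTransform c ψ, continuous_of_forall_sub_le hc hc_self hu⟩
  have hφu : ∫ x, φ x ∂μ ≤ ∫ x, u x ∂μ :=
    integral_mono (integrable_of_continuous μ φ.continuous)
      (integrable_of_continuous μ u.continuous) fun x => le_cTransform (hφψ x)
  have u_le (x : X) : u x ≤ -ψ x := by
    have : u x ≤ c x x - ψ x := cTransform_le hc ψ x x
    rwa [hc_self, zero_sub] at this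
  have huψ : ∫ x, u x ∂ν ≤ ∫ x, -ψ x ∂ν :=
    integral_mono (integrable_of_continuous ν u.continuous)
      (integrable_of_continuous ν ψ.continuous.neg) u_le
  rw [integral_neg] at huψ
  linarith [hK u hu]

end KantorovichRubinstein

section UnitTorus

/-- Normalized Haar measure on `ℝ / ℤ`, the measure underlying Mathlib's theory of `mFourier`. -/
local instance : MeasureSpace UnitAddCircle := ⟨AddCircle.haarAddCircle⟩

local instance : Measure.IsAddHaarMeasure (volume : Measure UnitAddCircle) :=
  inferInstanceAs (Measure.IsAddHaarMeasure AddCircle.haarAddCircle)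

local instance : IsProbabilityMeasure (volume : Measure UnitAddCircle) :=
  inferInstanceAs (IsProbabilityMeasure AddCircle.haarAddCircle)

open UnitAddTorus

variable {ι : Type*}

/-- The coefficients of the `j`-th partial derivative of `trigPolynomial F a`. -/
def derivCoeff (a : (ι → ℤ) → ℂ) (j : ι) (m : ι → ℤ) : ℂ := 2 * π * Complex.I * m j * a m

lemma norm_derivCoeff_sq (a : (ι → ℤ) → ℂ) (j : ι) (m : ι → ℤ) :
    ‖derivCoeff a j m‖ ^ 2 = (2 * π) ^ 2 * ((m j : ℝ) ^ 2 * ‖a m‖ ^ 2) := by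
  simp [derivCoeff, mul_pow]
  ring

variable [Fintype ι]

/-- The Euclidean (flat) distance on `ℝ^ι / ℤ^ι`; the `dist` of `UnitAddTorus ι` as a product of
circles is the supremum distance instead. -/
def euclideanDist (x y : UnitAddTorus ι) : ℝ := √(∑ i, ‖x i - y i‖ ^ 2)

lemma euclideanDist_eq_dist (x y : UnitAddTorus ι) :
    euclideanDist x y =
      dist (WithLp.toLp 2 x : PiLp 2 fun _ : ι => UnitAddCircle) (WithLp.toLp 2 y) := by
  simp only [euclideanDist, PiLp.dist_eq_of_L2, ← dist_eq_norm]

@[fun_prop]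
lemma continuous_euclideanDist :
    Continuous fun p : UnitAddTorus ι × UnitAddTorus ι => euclideanDist p.1 p.2 := by
  unfold euclideanDist
  fun_prop

lemma euclideanDist_nonneg (x y : UnitAddTorus ι) : 0 ≤ euclideanDist x y := Real.sqrt_nonneg _

@[simp]
lemma euclideanDist_self (x : UnitAddTorus ι) : euclideanDist x x = 0 := by simp [euclideanDist]

lemma euclideanDist_comm (x y : UnitAddTorus ι) : euclideanDist x y = euclideanDist y x := by
  simp only [euclideanDist, norm_sub_rev]

lemma euclideanDist_triangle (x y z : UnitAddTorus ι) :
    euclideanDist x z ≤ euclideanDist x y + euclideanDist y z := by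
  simpa only [euclideanDist_eq_dist] using dist_triangle _ _ _

lemma euclideanDist_sub_right (x y z : UnitAddTorus ι) :
    euclideanDist (x - z) (y - z) = euclideanDist x y := by
  simp [euclideanDist]

lemma euclideanDist_self_sub (x y : UnitAddTorus ι) :
    euclideanDist x (x - y) = euclideanDist y 0 := by
  simp [euclideanDist]

/-- The covering map `ℝ^ι → ℝ^ι / ℤ^ι`. -/
def torusMk (w : ι → ℝ) : UnitAddTorus ι := fun i => (w i : UnitAddCircle)

lemma euclideanDist_add_torusMk_le (x : UnitAddTorus ι) (w : ι → ℝ) :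
    euclideanDist (x + torusMk w) x ≤ √(∑ i, w i ^ 2) := by
  refine Real.sqrt_le_sqrt (Finset.sum_le_sum fun i _ => ?_)
  have : ‖(w i : UnitAddCircle)‖ ≤ |w i| := QuotientAddGroup.norm_mk_le_norm
  simpa [torusMk] using pow_le_pow_left₀ (norm_nonneg _) this 2

lemma mFourier_add_apply (m : ι → ℤ) (x y : UnitAddTorus ι) :
    mFourier m (x + y) = mFourier m x * mFourier m y := by
  simp [mFourier, ← Finset.prod_mul_distrib, fourier_apply, smul_add, AddCircle.toCircle_add]

lemma mFourier_neg_apply (m : ι → ℤ) (x : UnitAddTorus ι) : mFourier m (-x) = mFourier (-m) x := by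
  simp [mFourier, fourier_apply]

lemma mFourier_torusMk (m : ι → ℤ) (w : ι → ℝ) :
    mFourier m (torusMk w) = Complex.exp (2 * π * Complex.I * ∑ i, (m i : ℂ) * (w i : ℂ)) := by
  simp only [mFourier, ContinuousMap.coe_mk, torusMk, fourier_coe_apply]
  rw [← Complex.exp_sum, Finset.mul_sum]
  congr! 2 with i
  push_cast
  ring

/-- The trigonometric polynomial with frequencies in `F` and coefficients `a`. -/
def trigPolynomial (F : Finset (ι → ℤ)) (a : (ι → ℤ) → ℂ) : C(UnitAddTorus ι, ℂ) :=
  ∑ m ∈ F, a m • mFourier m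

lemma trigPolynomial_apply (F : Finset (ι → ℤ)) (a : (ι → ℤ) → ℂ) (x : UnitAddTorus ι) :
    trigPolynomial F a x = ∑ m ∈ F, a m * mFourier m x := by
  simp [trigPolynomial, ContinuousMap.sum_apply]

lemma integral_norm_sq_trigPolynomial (F : Finset (ι → ℤ)) (a : (ι → ℤ) → ℂ) :
    ∫ x, ‖trigPolynomial F a x‖ ^ 2 = ∑ m ∈ F, ‖a m‖ ^ 2 := by
  have toLp_eq : ContinuousMap.toLp 2 volume ℂ (trigPolynomial F a) =
      ∑ m ∈ F, a m • mFourierLp 2 m := by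
    simp only [trigPolynomial, map_sum, map_smul]
  have : ∫ x, trigPolynomial F a x * starRingEnd ℂ (trigPolynomial F a x) =
      ∑ m ∈ F, starRingEnd ℂ (a m) * a m := by
    rw [← orthonormal_mFourier.inner_sum a a F, ← toLp_eq, ContinuousMap.inner_toLp]
  simp only [Complex.mul_conj', Complex.conj_mul'] at this
  exact_mod_cast this

lemma hasDerivAt_mFourier_add_torusMk (m : ι → ℤ) (x : UnitAddTorus ι) (w : ι → ℝ) :
    HasDerivAt (fun t : ℝ => mFourier m (x + torusMk (t • w)))
      (mFourier m x * (2 * π * Complex.I * ∑ i, (m i : ℂ) * w i)) 0 := by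
  set z : ℂ := 2 * π * Complex.I * ∑ i, (m i : ℂ) * w i with hz
  have along_line (t : ℝ) :
      mFourier m (x + torusMk (t • w)) = mFourier m x * Complex.exp (t * z) := by
    rw [mFourier_add_apply, mFourier_torusMk, hz, mul_left_comm, Finset.mul_sum (a := (t : ℂ))]
    simp only [Pi.smul_apply, smul_eq_mul, Complex.ofReal_mul, mul_left_comm (t : ℂ)]
  have linear : HasDerivAt (fun t : ℝ => (t : ℂ) * z) z 0 := by
    simpa using (Complex.ofRealCLM.hasDerivAt (x := 0)).mul_const z
  simpa only [along_line, Complex.ofReal_zero, zero_mul, Complex.exp_zero, one_mul] using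
    linear.cexp.const_mul (mFourier m x)

lemma hasDerivAt_trigPolynomial_add_torusMk (F : Finset (ι → ℤ)) (a : (ι → ℤ) → ℂ)
    (x : UnitAddTorus ι) (w : ι → ℝ) :
    HasDerivAt (fun t : ℝ => trigPolynomial F a (x + torusMk (t • w)))
      (∑ j, w j * trigPolynomial F (derivCoeff a j) x) 0 := by
  have gradient_eq : ∑ j, w j * trigPolynomial F (derivCoeff a j) x =
      ∑ m ∈ F, a m * (mFourier m x * (2 * π * Complex.I * ∑ j, (m j : ℂ) * w j)) := by
    simp only [trigPolynomial_apply, derivCoeff, Finset.mul_sum]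
    rw [Finset.sum_comm]
    exact Finset.sum_congr rfl fun m _ => Finset.sum_congr rfl fun j _ => by ring
  rw [gradient_eq]
  simpa only [trigPolynomial_apply] using HasDerivAt.fun_sum fun m (_ : m ∈ F) =>
    (hasDerivAt_mFourier_add_torusMk m x w).const_mul (a m)

lemma im_eq_zero_of_hasDerivAt_ofReal {f : ℝ → ℝ} {f' : ℂ} {t : ℝ}
    (hf : HasDerivAt (fun s => (f s : ℂ)) f' t) : f'.im = 0 := by
  have := Complex.imCLM.hasFDerivAt.comp_hasDerivAt t hf
  exact this.unique (by simpa using! hasDerivAt_const t (0 : ℝ))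

section Lipschitz

variable {v : UnitAddTorus ι → ℝ} {L : ℝ} {F : Finset (ι → ℤ)} {a : (ι → ℤ) → ℂ}

lemma abs_sub_le_of_forall_sub_le (hv : ∀ x y, v x - v y ≤ L * euclideanDist x y)
    (x y : UnitAddTorus ι) : |v x - v y| ≤ L * euclideanDist x y :=
  abs_sub_le_iff.2 ⟨hv x y, euclideanDist_comm x y ▸ hv y x⟩

lemma norm_gradient_mul_le (hva : ∀ x, (v x : ℂ) = trigPolynomial F a x) (hL : 0 ≤ L)
    (hv : ∀ x y, v x - v y ≤ L * euclideanDist x y) (x : UnitAddTorus ι) (w : ι → ℝ) :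
    ‖∑ j, w j * trigPolynomial F (derivCoeff a j) x‖ ≤ L * √(∑ j, w j ^ 2) := by
  refine (hasDerivAt_trigPolynomial_add_torusMk F a x w).le_of_lip' (by positivity)
    (.of_forall fun t => ?_)
  have norm_smul_eq : √(∑ j, (t • w) j ^ 2) = |t| * √(∑ j, w j ^ 2) := by
    simp only [Pi.smul_apply, smul_eq_mul, mul_pow, ← Finset.mul_sum]
    rw [Real.sqrt_mul (sq_nonneg t), Real.sqrt_sq_eq_abs]
  have zero : x + torusMk ((0 : ℝ) • w) = x := by ext; simp [torusMk]
  rw [← hva, ← hva, zero, ← Complex.ofReal_sub, Complex.norm_real, Real.norm_eq_abs]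
  calc |v (x + torusMk (t • w)) - v x|
      ≤ L * euclideanDist (x + torusMk (t • w)) x := abs_sub_le_of_forall_sub_le hv _ _
    _ ≤ L * √(∑ j, (t • w) j ^ 2) := by gcongr; exact euclideanDist_add_torusMk_le x _
    _ = L * √(∑ j, w j ^ 2) * ‖t - 0‖ := by
      rw [norm_smul_eq, sub_zero, Real.norm_eq_abs]
      ring

/- Since `v` is real, so is its gradient, which may therefore be taken as direction. -/
lemma sum_norm_sq_gradient_le (hva : ∀ x, (v x : ℂ) = trigPolynomial F a x) (hL : 0 ≤ L)
    (hv : ∀ x y, v x - v y ≤ L * euclideanDist x y) (x : UnitAddTorus ι) :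
    ∑ j, ‖trigPolynomial F (derivCoeff a j) x‖ ^ 2 ≤ L ^ 2 := by
  classical
  let g (j : ι) : ℝ := (trigPolynomial F (derivCoeff a j) x).re
  have hg (j : ι) : trigPolynomial F (derivCoeff a j) x = g j := by
    refine Complex.ext rfl (im_eq_zero_of_hasDerivAt_ofReal
      (f := fun t => v (x + torusMk (t • Pi.single j 1))) (t := 0) ?_)
    simpa [hva, Pi.single_apply, apply_ite Complex.ofReal] using
      hasDerivAt_trigPolynomial_add_torusMk F a x (Pi.single j 1)
  have along_gradient : ∑ j, g j ^ 2 ≤ L * √(∑ j, g j ^ 2) := by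
    have : ‖∑ j, (g j : ℂ) * g j‖ = ∑ j, g j ^ 2 := by
      simp only [← sq, ← Complex.ofReal_pow, ← Complex.ofReal_sum]
      rw [Complex.norm_real, Real.norm_of_nonneg (by positivity)]
    simpa only [hg, this] using norm_gradient_mul_le hva hL hv x g
  have norm_sq : √(∑ j, g j ^ 2) ^ 2 = ∑ j, g j ^ 2 := Real.sq_sqrt (by positivity)
  simp only [hg, Complex.norm_real, Real.norm_eq_abs, sq_abs]
  nlinarith [sq_nonneg (L - √(∑ j, g j ^ 2))]

theorem sum_sq_mul_norm_sq_coeff_le (hva : ∀ x, (v x : ℂ) = trigPolynomial F a x) (hL : 0 ≤ L)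
    (hv : ∀ x y, v x - v y ≤ L * euclideanDist x y) :
    (2 * π) ^ 2 * ∑ m ∈ F, (∑ j, (m j : ℝ) ^ 2) * ‖a m‖ ^ 2 ≤ L ^ 2 := by
  have hint (j : ι) : Integrable fun x => ‖trigPolynomial F (derivCoeff a j) x‖ ^ 2 :=
    integrable_of_continuous _ (by fun_prop)
  calc (2 * π) ^ 2 * ∑ m ∈ F, (∑ j, (m j : ℝ) ^ 2) * ‖a m‖ ^ 2
      = ∑ j, ∑ m ∈ F, ‖derivCoeff a j m‖ ^ 2 := by
        simp only [norm_derivCoeff_sq, Finset.sum_mul, Finset.mul_sum]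
        exact Finset.sum_comm
    _ = ∫ x, ∑ j, ‖trigPolynomial F (derivCoeff a j) x‖ ^ 2 := by
        rw [integral_finsetSum _ fun j _ => hint j]
        simp only [integral_norm_sq_trigPolynomial]
    _ ≤ ∫ _ : UnitAddTorus ι, L ^ 2 :=
        integral_mono (integrable_finsetSum _ fun j _ => hint j) (integrable_const _)
          (sum_norm_sq_gradient_le hva hL hv)
    _ = L ^ 2 := by simp

end Lipschitz

lemma exists_eq_trigPolynomial {f : C(UnitAddTorus ι, ℂ)} (hf : f ∈ mFourierSubalgebra ι) :
    ∃ F a, f = trigPolynomial F a := by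
  have : f ∈ Submodule.span ℂ (Set.range (mFourier (d := ι))) := by
    rwa [← mFourierSubalgebra_coe]
  obtain ⟨a, rfl⟩ := Finsupp.mem_span_range_iff_exists_finsupp.1 this
  exact ⟨a.support, a, rfl⟩

lemma re_lt_one_of_norm_eq_one {z : ℂ} (hz : ‖z‖ = 1) (hz1 : z ≠ 1) : z.re < 1 := by
  refine lt_of_le_of_ne (hz ▸ Complex.re_le_norm z) fun hre => hz1 ?_
  have := Complex.eq_coe_norm_of_nonneg (Complex.re_eq_norm.1 (hre.trans hz.symm))
  rw [this, hz, Complex.ofReal_one]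

/-- A nonnegative trigonometric polynomial with a strict maximum at the origin, so that its
normalized powers are an approximate identity. -/
def peak (x : UnitAddTorus ι) : ℝ := 1 + ∑ i, (1 + (fourier 1 (x i)).re)

@[fun_prop]
lemma continuous_peak : Continuous (peak (ι := ι)) := by
  unfold peak
  fun_prop

lemma norm_fourier_one (t : UnitAddCircle) : ‖fourier 1 t‖ = 1 := by
  rw [fourier_one, Circle.norm_coe]

lemma peak_pos (x : UnitAddTorus ι) : 0 < peak x := by
  have (i : ι) : 0 ≤ 1 + (fourier 1 (x i)).re := by
    linarith [neg_le_of_abs_le (Complex.abs_re_le_norm (fourier 1 (x i))), norm_fourier_one (x i)]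
  exact add_pos_of_pos_of_nonneg one_pos (Finset.sum_nonneg fun i _ => this i)

lemma peak_lt_peak_zero {x : UnitAddTorus ι} (hx : x ≠ 0) : peak x < peak (0 : UnitAddTorus ι) := by
  obtain ⟨j, hj⟩ := Function.ne_iff.1 hx
  have re_zero : (fourier 1 (0 : UnitAddCircle)).re = 1 := by simp
  have re_le (i : ι) : (fourier 1 (x i)).re ≤ 1 :=
    (Complex.re_le_norm _).trans_eq (norm_fourier_one (x i))
  have re_lt : (fourier 1 (x j)).re < 1 := by
    refine re_lt_one_of_norm_eq_one (norm_fourier_one _) fun h => hj ?_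
    rw [fourier_one, Circle.coe_eq_one, ← AddCircle.toCircle_zero] at h
    exact AddCircle.injective_toCircle one_ne_zero h
  simp only [peak, Pi.zero_apply, re_zero]
  gcongr 1 + ?_
  exact Finset.sum_lt_sum (fun i _ => by linarith [re_le i]) ⟨j, Finset.mem_univ j, by linarith⟩

lemma exists_mem_mFourierSubalgebra_eq_peak :
    ∃ P ∈ mFourierSubalgebra ι, ∀ x, P x = (peak x : ℂ) := by
  classical
  let e (i : ι) : C(UnitAddTorus ι, ℂ) := mFourier (Pi.single i 1)
  have e_mem (i : ι) : e i ∈ mFourierSubalgebra ι := Algebra.subset_adjoin ⟨_, rfl⟩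
  refine ⟨1 + ∑ i, (1 + (1 / 2 : ℂ) • (e i + star (e i))), ?_, fun x => ?_⟩
  · exact add_mem (one_mem _) (sum_mem fun i _ => add_mem (one_mem _)
      (SMulMemClass.smul_mem _ (add_mem (e_mem i) (star_mem (e_mem i)))))
  · simp [peak, e, ContinuousMap.sum_apply, mFourier_single, Complex.re_eq_add_conj]
    ring_nf

lemma exists_trigPolynomial_kernel (g : C(UnitAddTorus ι, ℝ)) {ε : ℝ} (hε : g 0 < ε) :
    ∃ (k : C(UnitAddTorus ι, ℝ)) (F : Finset (ι → ℤ)) (a : (ι → ℤ) → ℂ),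
      (∀ x, (k x : ℂ) = trigPolynomial F a x) ∧ (∀ x, 0 ≤ k x) ∧ ∫ x, k x = 1 ∧
        ∫ x, k x * g x < ε := by
  have concentrates := tendsto_setIntegral_pow_smul_of_unique_maximum_of_isCompact_of_continuousOn
    (μ := volume) (isCompact_univ (X := UnitAddTorus ι)) continuous_peak.continuousOn
    (fun y _ hy => peak_lt_peak_zero hy) (fun y _ => (peak_pos y).le) (peak_pos 0) (by simp)
    g.continuous.continuousOn
  obtain ⟨n, hn⟩ := (concentrates.eventually_lt_const hε).exists
  simp only [setIntegral_univ, smul_eq_mul, ← integral_const_mul, ← mul_assoc] at hn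
  set A := ∫ x : UnitAddTorus ι, peak x ^ n
  have A_pos : 0 < A := (continuous_peak.pow n).integral_pos_of_hasCompactSupport_nonneg_nonzero
    (.of_compactSpace _) (fun x => (pow_pos (peak_pos x) n).le) (pow_pos (peak_pos 0) n).ne'
  obtain ⟨P, P_mem, hP⟩ := exists_mem_mFourierSubalgebra_eq_peak (ι := ι)
  obtain ⟨F, a, hFa⟩ := exists_eq_trigPolynomial
    (SMulMemClass.smul_mem (A⁻¹ : ℂ) (pow_mem P_mem n))
  refine ⟨⟨fun x => A⁻¹ * peak x ^ n, by fun_prop⟩, F, a, fun x => ?_, fun x => ?_, ?_, hn⟩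
  · simp [← hFa, hP]
  · exact mul_nonneg (inv_nonneg.2 A_pos.le) (pow_pos (peak_pos x) n).le
  · simpa only [ContinuousMap.coe_mk, integral_const_mul] using inv_mul_cancel₀ A_pos.ne'

section Convolution

open scoped Convolution

variable {k u : C(UnitAddTorus ι, ℝ)}

lemma integrable_mul_comp_sub (x : UnitAddTorus ι) : Integrable fun y => k y * u (x - y) :=
  integrable_of_continuous _ (by fun_prop)

lemma convolution_eq_trigPolynomial {F : Finset (ι → ℤ)} {a : (ι → ℤ) → ℂ}
    (hka : ∀ x, (k x : ℂ) = trigPolynomial F a x) (x : UnitAddTorus ι) :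
    ((k ⋆ u) x : ℂ) = trigPolynomial F (fun m => a m * mFourierCoeff (fun y => (u y : ℂ)) m) x := by
  have : Measure.IsNegInvariant (volume : Measure (UnitAddTorus ι)) :=
    Measure.IsAddHaarMeasure.isNegInvariant_of_regular volume
  have separate (y : UnitAddTorus ι) : ((k (x - y) * u y : ℝ) : ℂ) =
      ∑ m ∈ F, a m * mFourier m x * (mFourier (-m) y * u y) := by
    rw [Complex.ofReal_mul, hka, trigPolynomial_apply, Finset.sum_mul]
    refine Finset.sum_congr rfl fun m _ => ?_
    rw [sub_eq_add_neg, mFourier_add_apply, mFourier_neg_apply]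
    ring
  calc ((k ⋆ u) x : ℂ) = ∫ y, ∑ m ∈ F, a m * mFourier m x * (mFourier (-m) y * u y) := by
        simp only [convolution_lsmul_swap, smul_eq_mul, ← integral_complex_ofReal, separate]
    _ = ∑ m ∈ F, a m * mFourier m x * ∫ y, mFourier (-m) y * (u y : ℂ) := by
        rw [integral_finsetSum _ fun m _ => integrable_of_continuous _ (by fun_prop)]
        simp only [integral_const_mul]
    _ = trigPolynomial F (fun m => a m * mFourierCoeff (fun y => (u y : ℂ)) m) x := by
        simp only [trigPolynomial_apply, mFourierCoeff, smul_eq_mul]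
        exact Finset.sum_congr rfl fun m _ => by ring

variable {L : ℝ} (hk : ∀ x, 0 ≤ k x) (hk_int : ∫ x, k x = 1)
  (hu : ∀ x y, u x - u y ≤ L * euclideanDist x y)

include hk hk_int hu

lemma convolution_sub_convolution_le (x y : UnitAddTorus ι) :
    (k ⋆ u) x - (k ⋆ u) y ≤ L * euclideanDist x y := by
  simp only [convolution_lsmul, smul_eq_mul]
  rw [← integral_sub (integrable_mul_comp_sub x) (integrable_mul_comp_sub y)]
  calc ∫ z, (k z * u (x - z) - k z * u (y - z)) ≤ ∫ z, k z * (L * euclideanDist x y) := by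
        refine integral_mono
          ((integrable_mul_comp_sub x).sub (integrable_mul_comp_sub y))
          (integrable_of_continuous _ (by fun_prop)) fun z => ?_
        have := hu (x - z) (y - z)
        rw [euclideanDist_sub_right] at this
        simpa only [mul_sub] using mul_le_mul_of_nonneg_left this (hk z)
    _ = L * euclideanDist x y := by rw [integral_mul_const, hk_int, one_mul]

lemma abs_convolution_sub_le (x : UnitAddTorus ι) :
    |(k ⋆ u) x - u x| ≤ ∫ y, k y * (L * euclideanDist y 0) := by
  have average : u x = ∫ y, k y * u x := by rw [integral_mul_const, hk_int, one_mul]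
  have hx : Integrable fun y => k y * u x := integrable_of_continuous _ (by fun_prop)
  rw [convolution_lsmul, average]
  simp only [smul_eq_mul]
  rw [← integral_sub (integrable_mul_comp_sub x) hx]
  refine abs_integral_le_integral_abs.trans
    (integral_mono ((integrable_mul_comp_sub x).sub hx).abs
      (integrable_of_continuous _ (by fun_prop)) fun y => ?_)
  simp only
  rw [← mul_sub, abs_mul, abs_of_nonneg (hk y), ← euclideanDist_self_sub x y, euclideanDist_comm]
  exact mul_le_mul_of_nonneg_left (abs_sub_le_of_forall_sub_le hu _ _) (hk y)

end Convolution

theorem exists_lipschitz_trigPolynomial_abs_sub_le {u : C(UnitAddTorus ι, ℝ)} {L : ℝ}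
    (hu : ∀ x y, u x - u y ≤ L * euclideanDist x y) {ε : ℝ} (hε : 0 < ε) :
    ∃ (v : UnitAddTorus ι → ℝ) (F : Finset (ι → ℤ)) (a : (ι → ℤ) → ℂ),
      (∀ x, (v x : ℂ) = trigPolynomial F a x) ∧
        (∀ x y, v x - v y ≤ L * euclideanDist x y) ∧ ∀ x, |v x - u x| ≤ ε := by
  let g : C(UnitAddTorus ι, ℝ) := ⟨fun y => L * euclideanDist y 0, by fun_prop⟩
  obtain ⟨k, F, a, hka, hk, hk_int, hkg⟩ :=
    exists_trigPolynomial_kernel g (show g 0 < ε by simpa [g] using hε)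
  exact ⟨_, F, _, convolution_eq_trigPolynomial hka, convolution_sub_convolution_le hk hk_int hu,
    fun x => (abs_convolution_sub_le hk hk_int hu x).trans hkg.le⟩

section DualBound

variable {μ ν : Measure (UnitAddTorus ι)} [IsProbabilityMeasure μ] [IsProbabilityMeasure ν]
  {L S : ℝ} (hL : 0 ≤ L)
  (hS : ∀ F : Finset (ι → ℤ), ∑ m ∈ F,
    ‖∫ x, mFourier m x ∂μ - ∫ x, mFourier m x ∂ν‖ ^ 2 / ∑ i, (m i : ℝ) ^ 2 ≤ S)

lemma ofReal_integral_eq_sum {v : UnitAddTorus ι → ℝ} {F : Finset (ι → ℤ)} {a : (ι → ℤ) → ℂ}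
    (hva : ∀ x, (v x : ℂ) = trigPolynomial F a x) (μ : Measure (UnitAddTorus ι))
    [IsFiniteMeasure μ] :
    ((∫ x, v x ∂μ : ℝ) : ℂ) = ∑ m ∈ F, a m * ∫ x, mFourier m x ∂μ := by
  simp only [← integral_complex_ofReal, hva, trigPolynomial_apply]
  rw [integral_finsetSum _ fun m _ => integrable_of_continuous _ (by fun_prop)]
  simp only [integral_const_mul]

lemma sqrt_sum_sq_pos {m : ι → ℤ} (hm : m ≠ 0) : 0 < √(∑ i, (m i : ℝ) ^ 2) := by
  obtain ⟨j, hj⟩ := Function.ne_iff.1 hm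
  have : (m j : ℝ) ≠ 0 := Int.cast_ne_zero.2 hj
  exact Real.sqrt_pos.2 (Finset.sum_pos' (fun i _ => sq_nonneg _)
    ⟨j, Finset.mem_univ j, by positivity⟩)

include hL hS

lemma integral_sub_integral_le_of_trigPolynomial {v : UnitAddTorus ι → ℝ} {F : Finset (ι → ℤ)}
    {a : (ι → ℤ) → ℂ} (hva : ∀ x, (v x : ℂ) = trigPolynomial F a x)
    (hv : ∀ x y, v x - v y ≤ L * euclideanDist x y) :
    ∫ x, v x ∂μ - ∫ x, v x ∂ν ≤ L / (2 * π) * √S := by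
  let Δ (m : ι → ℤ) : ℂ := ∫ x, mFourier m x ∂μ - ∫ x, mFourier m x ∂ν
  let r (m : ι → ℤ) : ℝ := √(∑ i, (m i : ℝ) ^ 2)
  have r_sq (m : ι → ℤ) : r m ^ 2 = ∑ i, (m i : ℝ) ^ 2 := Real.sq_sqrt (by positivity)
  have split (m : ι → ℤ) : ‖a m * Δ m‖ = (r m * ‖a m‖) * (‖Δ m‖ / r m) := by
    rcases eq_or_ne m 0 with rfl | hm
    · simp [Δ, r, mFourier_zero]
    · have : r m ≠ 0 := (sqrt_sum_sq_pos hm).ne'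
      rw [norm_mul]
      field_simp
  have energy : ∑ m ∈ F, (r m * ‖a m‖) ^ 2 ≤ (L / (2 * π)) ^ 2 := by
    rw [div_pow, le_div_iff₀' (by positivity)]
    simpa only [mul_pow, r_sq] using sum_sq_mul_norm_sq_coeff_le hva hL hv
  have discrepancy : ∑ m ∈ F, (‖Δ m‖ / r m) ^ 2 ≤ S := by
    simpa only [div_pow, r_sq] using hS F
  calc ∫ x, v x ∂μ - ∫ x, v x ∂ν ≤ ‖∑ m ∈ F, a m * Δ m‖ := by
        simp only [Δ, mul_sub, Finset.sum_sub_distrib, ← ofReal_integral_eq_sum hva]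
        rw [← Complex.ofReal_sub, Complex.norm_real]
        exact Real.le_norm_self _
    _ ≤ ∑ m ∈ F, (r m * ‖a m‖) * (‖Δ m‖ / r m) :=
        (norm_sum_le _ _).trans_eq (Finset.sum_congr rfl fun m _ => split m)
    _ ≤ √(∑ m ∈ F, (r m * ‖a m‖) ^ 2) * √(∑ m ∈ F, (‖Δ m‖ / r m) ^ 2) :=
        Real.sum_mul_le_sqrt_mul_sqrt _ _ _
    _ ≤ √((L / (2 * π)) ^ 2) * √S := by gcongr
    _ = L / (2 * π) * √S := by rw [Real.sqrt_sq (by positivity)]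

theorem integral_sub_integral_le_of_lipschitz {u : C(UnitAddTorus ι, ℝ)}
    (hu : ∀ x y, u x - u y ≤ L * euclideanDist x y) :
    ∫ x, u x ∂μ - ∫ x, u x ∂ν ≤ L / (2 * π) * √S := by
  refine le_of_forall_pos_le_add fun ε hε => ?_
  obtain ⟨v, F, a, hva, hv, hvu⟩ := exists_lipschitz_trigPolynomial_abs_sub_le hu (half_pos hε)
  have v_cont : Continuous v := continuous_of_forall_sub_le
    (c := fun x y => L * euclideanDist x y) (by fun_prop) (by simp) hv
  have close (ρ : Measure (UnitAddTorus ι)) [IsProbabilityMeasure ρ] :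
      |∫ x, v x ∂ρ - ∫ x, u x ∂ρ| ≤ ε / 2 := by
    rw [← integral_sub (integrable_of_continuous ρ v_cont)
      (integrable_of_continuous ρ u.continuous)]
    have : ∀ᵐ x ∂ρ, ‖v x - u x‖ ≤ ε / 2 := .of_forall hvu
    simpa using norm_integral_le_of_norm_le_const this
  linarith [integral_sub_integral_le_of_trigPolynomial hL hS hva hv, abs_le.1 (close μ),
    abs_le.1 (close ν)]

end DualBound

end UnitTorus

lemma sq_le_tsum_ofReal_of_forall_le_sqrt {β : Type*} {s : β → ℝ} (hs : ∀ b, 0 ≤ s b) {W : ℝ≥0∞}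
    (hW : ∀ S : ℝ, (∀ F : Finset β, ∑ b ∈ F, s b ≤ S) → W ≤ ENNReal.ofReal √S) :
    W ^ 2 ≤ ∑' b, ENNReal.ofReal (s b) := by
  set T := ∑' b, ENNReal.ofReal (s b)
  rcases eq_or_ne T ⊤ with htop | hfin
  · exact htop ▸ le_top
  have sum_le (F : Finset β) : ∑ b ∈ F, s b ≤ T.toReal := by
    rw [← ENNReal.ofReal_le_iff_le_toReal hfin, ENNReal.ofReal_sum_of_nonneg fun b _ => hs b]
    exact ENNReal.sum_le_tsum F
  calc W ^ 2 ≤ ENNReal.ofReal √T.toReal ^ 2 := by gcongr; exact hW _ sum_le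
    _ = T := by
        rw [← ENNReal.ofReal_pow (Real.sqrt_nonneg _), Real.sq_sqrt ENNReal.toReal_nonneg,
          ENNReal.ofReal_toReal hfin]

section Cube

open UnitAddTorus

variable {d : ℕ}

/-- The projection `ℝ^d → ℝ^d / (2πℤ)^d`, with the quotient rescaled to the unit torus. -/
def toUnitTorus (x : Fin d → ℝ) : UnitAddTorus (Fin d) := torusMk fun i => x i / (2 * π)

/-- The representative in `Qcube d` of a point of the rescaled torus. -/
def cubeRepr (a : UnitAddTorus (Fin d)) (i : Fin d) : ℝ :=
  2 * π * (AddCircle.equivIoc 1 (-(1 / 2) : ℝ) (a i) : ℝ)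

lemma measurable_toUnitTorus : Measurable (toUnitTorus (d := d)) :=
  measurable_pi_lambda _ fun i =>
    AddCircle.measurable_mk'.comp ((measurable_pi_apply i).div_const _)

lemma measurable_cubeRepr : Measurable (cubeRepr (d := d)) :=
  measurable_pi_lambda _ fun i => (measurable_subtype_coe.comp
    ((AddCircle.measurableEquivIoc 1 (-(1 / 2) : ℝ)).measurable.comp
      (measurable_pi_apply i))).const_mul _

lemma cubeRepr_toUnitTorus {x : Fin d → ℝ} (hx : x ∈ Qcube d) : cubeRepr (toUnitTorus x) = x := by
  ext i
  have hi : x i / (2 * π) ∈ Set.Ioc (-(1 / 2) : ℝ) (-(1 / 2) + 1) := by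
    obtain ⟨hlow, hup⟩ := hx i
    constructor
    · rw [lt_div_iff₀ (by positivity)]
      linarith
    · rw [div_le_iff₀ (by positivity)]
      linarith
  rw [cubeRepr, toUnitTorus, torusMk, AddCircle.equivIoc_coe_of_mem hi]
  field_simp

lemma map_cubeRepr_map_toUnitTorus {μ : Measure (Fin d → ℝ)} (hμ : μ (Qcube d)ᶜ = 0) :
    (μ.map toUnitTorus).map cubeRepr = μ := by
  have mem_cube : ∀ᵐ x ∂μ, x ∈ Qcube d := hμ
  have repr_eq : cubeRepr ∘ toUnitTorus =ᵐ[μ] id := mem_cube.mono fun x => cubeRepr_toUnitTorus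
  rw [Measure.map_map measurable_cubeRepr measurable_toUnitTorus, Measure.map_congr repr_eq,
    Measure.map_id]

lemma integral_mFourier_map_toUnitTorus (μ : Measure (Fin d → ℝ)) (m : Fin d → ℤ) :
    ∫ a, mFourier m a ∂μ.map toUnitTorus = fourierStieltjes μ m := by
  rw [integral_map measurable_toUnitTorus.aemeasurable
    (mFourier m).continuous.aestronglyMeasurable]
  refine integral_congr_ae (.of_forall fun x => ?_)
  simp only [toUnitTorus, mFourier_torusMk, Finset.mul_sum]
  congr! 2 with i
  push_cast
  field_simp

lemma rhoCircle_nonneg {s t : ℝ} (hst : |s - t| ≤ 2 * π) : 0 ≤ rhoCircle s t :=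
  le_min (abs_nonneg _) (sub_nonneg.2 hst)

lemma rhoCircle_two_pi_mul_le (s t : ℝ) :
    rhoCircle (2 * π * s) (2 * π * t) ≤ 2 * π * ‖(s : UnitAddCircle) - t‖ := by
  have abs_eq : |2 * π * s - 2 * π * t| = 2 * π * |s - t| := by
    rw [← mul_sub, abs_mul, abs_of_pos two_pi_pos]
  have norm_eq : ‖(s : UnitAddCircle) - t‖ = |s - t - round (s - t)| := by
    rw [← AddCircle.coe_sub, UnitAddCircle.norm_eq]
  rw [rhoCircle, abs_eq, norm_eq]
  rcases eq_or_ne (round (s - t)) 0 with hround | hround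
  · simp [hround]
  · have one_le : (1 : ℝ) ≤ |(round (s - t) : ℝ)| := mod_cast Int.one_le_abs hround
    have triangle : |(round (s - t) : ℝ)| ≤ |s - t| + |s - t - round (s - t)| := by
      simpa using abs_sub (s - t) (s - t - round (s - t))
    calc min (2 * π * |s - t|) (2 * π - 2 * π * |s - t|) ≤ 2 * π * (1 - |s - t|) :=
          (min_le_right _ _).trans_eq (by ring)
      _ ≤ 2 * π * |s - t - round (s - t)| := by gcongr; linarith

lemma rhoTorus_cubeRepr_le (a b : UnitAddTorus (Fin d)) :
    rhoTorus (cubeRepr a) (cubeRepr b) ≤ 2 * π * euclideanDist a b := by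
  have coord (i : Fin d) : 0 ≤ rhoCircle (cubeRepr a i) (cubeRepr b i) ∧
      rhoCircle (cubeRepr a i) (cubeRepr b i) ≤ 2 * π * ‖a i - b i‖ := by
    let s := AddCircle.equivIoc 1 (-(1 / 2) : ℝ) (a i)
    let t := AddCircle.equivIoc 1 (-(1 / 2) : ℝ) (b i)
    have hs : ((s : ℝ) : UnitAddCircle) = a i :=
      (AddCircle.equivIoc 1 (-(1 / 2) : ℝ)).symm_apply_apply (a i)
    have ht : ((t : ℝ) : UnitAddCircle) = b i :=
      (AddCircle.equivIoc 1 (-(1 / 2) : ℝ)).symm_apply_apply (b i)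
    have hst : |(s : ℝ) - t| ≤ 1 := abs_le.2
      ⟨by linarith [s.2.1, t.2.2], by linarith [s.2.2, t.2.1]⟩
    refine ⟨rhoCircle_nonneg ?_, hs ▸ ht ▸ rhoCircle_two_pi_mul_le s t⟩
    rw [cubeRepr, cubeRepr, ← mul_sub, abs_mul, abs_of_pos two_pi_pos]
    exact mul_le_of_le_one_right two_pi_pos.le hst
  calc rhoTorus (cubeRepr a) (cubeRepr b) ≤ √(∑ i, (2 * π * ‖a i - b i‖) ^ 2) :=
        Real.sqrt_le_sqrt (Finset.sum_le_sum fun i _ =>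
          pow_le_pow_left₀ (coord i).1 (coord i).2 2)
    _ = 2 * π * euclideanDist a b := by
        simp only [mul_pow, ← Finset.mul_sum, euclideanDist]
        rw [← mul_pow, Real.sqrt_mul (by positivity), Real.sqrt_sq two_pi_pos.le]

lemma measurable_rhoTorus :
    Measurable fun p : (Fin d → ℝ) × (Fin d → ℝ) => rhoTorus p.1 p.2 := by
  unfold rhoTorus rhoCircle
  fun_prop

lemma W1tilde_le_transportCost {μ ν : Measure (Fin d → ℝ)} (hμ : μ (Qcube d)ᶜ = 0)
    (hν : ν (Qcube d)ᶜ = 0) :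
    W1tilde μ ν ≤ transportCost (fun a b => 2 * π * euclideanDist a b)
      (μ.map toUnitTorus) (ν.map toUnitTorus) := by
  calc W1tilde μ ν = transportCost rhoTorus ((μ.map toUnitTorus).map cubeRepr)
        ((ν.map toUnitTorus).map cubeRepr) := by
        rw [map_cubeRepr_map_toUnitTorus hμ, map_cubeRepr_map_toUnitTorus hν, W1tilde]
    _ ≤ transportCost (fun a b => rhoTorus (cubeRepr a) (cubeRepr b)) (μ.map toUnitTorus)
        (ν.map toUnitTorus) := transportCost_map_le measurable_cubeRepr measurable_rhoTorus _ _
    _ ≤ _ := transportCost_mono rhoTorus_cubeRepr_le _ _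

theorem W1tilde_le_sqrt_of_forall_sum_le {μ ν : Measure (Fin d → ℝ)} [IsProbabilityMeasure μ]
    [IsProbabilityMeasure ν] (hμ : μ (Qcube d)ᶜ = 0) (hν : ν (Qcube d)ᶜ = 0) {S : ℝ}
    (hS : ∀ F : Finset (Fin d → ℤ), ∑ m ∈ F,
      ‖fourierStieltjes μ m - fourierStieltjes ν m‖ ^ 2 / ∑ i, (m i : ℝ) ^ 2 ≤ S) :
    W1tilde μ ν ≤ ENNReal.ofReal √S := by
  have := Measure.isProbabilityMeasure_map (μ := μ) measurable_toUnitTorus.aemeasurable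
  have := Measure.isProbabilityMeasure_map (μ := ν) measurable_toUnitTorus.aemeasurable
  simp only [← integral_mFourier_map_toUnitTorus] at hS
  refine (W1tilde_le_transportCost hμ hν).trans (transportCost_le_of_forall_sub_le (by fun_prop)
    (fun a b => mul_nonneg two_pi_pos.le (euclideanDist_nonneg a b)) (by simp) (fun a b c => ?_)
    fun u hu => ?_)
  · rw [← mul_add]
    exact mul_le_mul_of_nonneg_left (euclideanDist_triangle a b c) two_pi_pos.le
  · simpa [two_pi_pos.ne'] using integral_sub_integral_le_of_lipschitz two_pi_pos.le hS hu

end Cube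

/-- Lemma 1 (torus version): `W̃₁(μ,ν)² ≤ Σ_{m ≠ 0} |f_μ(m) − f_ν(m)|² / |m|²`. -/
theorem W1tilde_sq_le_fourier_sum {d : ℕ}
    (μ ν : Measure (Fin d → ℝ)) [IsProbabilityMeasure μ] [IsProbabilityMeasure ν]
    (hμ : μ (Qcube d)ᶜ = 0) (hν : ν (Qcube d)ᶜ = 0) :
    W1tilde μ ν ^ 2 ≤
      ∑' m : {m : Fin d → ℤ // m ≠ 0},
        ENNReal.ofReal
          (‖fourierStieltjes μ m - fourierStieltjes ν m‖ ^ 2 / ∑ i, ((m.1 i : ℝ)) ^ 2) := by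
  let s (m : Fin d → ℤ) : ℝ :=
    ‖fourierStieltjes μ m - fourierStieltjes ν m‖ ^ 2 / ∑ i, (m i : ℝ) ^ 2
  have support_subset : Function.support (fun m => ENNReal.ofReal (s m)) ⊆ {m | m ≠ 0} := by
    rintro m hm rfl
    -- The denominator vanishes at `m = 0`, and `x / 0 = 0`.
    simp [s] at hm
  calc W1tilde μ ν ^ 2 ≤ ∑' m, ENNReal.ofReal (s m) :=
        sq_le_tsum_ofReal_of_forall_le_sqrt (fun m => by positivity) fun _ =>
          W1tilde_le_sqrt_of_forall_sum_le hμ hν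
    _ = ∑' m : {m : Fin d → ℤ // m ≠ 0}, ENNReal.ofReal (s m) :=
        (tsum_subtype_eq_of_support_subset support_subset).symm
end
end

section
/- (Lemma 1, cube version.) Given two Borel probability measures μ and ν supported on [0,π]^d with Fourier–Stieltjes transforms f_μ and f_ν, one has W₁(μ,ν)² ≤ Σ_{m ∈ ℤ^d, m ≠ 0} |f_μ(m) − f_ν(m)|² / |m|². -/
open MeasureTheory Real ENNReal

noncomputable section

/-- Euclidean distance on `Fin d → ℝ`. -/
def euclidDist {d : ℕ} (x y : Fin d → ℝ) : ℝ := Real.sqrt (∑ i, (x i - y i) ^ 2)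

/-- Euclidean Kantorovich distance `W₁`. -/
def W1 {d : ℕ} (μ ν : Measure (Fin d → ℝ)) : ℝ≥0∞ := transportCost euclidDist μ ν

/-!
By Kantorovich–Rubinstein duality it suffices to bound `∫ f dμ - ∫ f dν` for `1`-Lipschitz `f`. On
`[0, π]^d` such an `f` agrees with its extension `u` that is even and `2π`-periodic in every
variable, and `u` is again `1`-Lipschitz. Rademacher's theorem and Parseval's identity for the
partial derivatives of `u` give `∑ |m|² |û(m)|² ≤ 1`. Pairing `û` with `f_μ - f_ν`, which vanishes
at `m = 0`, the Cauchy–Schwarz inequality with weights `|m|` and `1 / |m|` gives the bound. To make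
the Fourier series of `u` absolutely convergent, `u` is first convolved with a probability density
concentrated near `0`, which does not increase `|û(m)|`.

The coupling in the duality theorem comes from the Hahn–Banach theorem, applied to the value
of the dual problem as a sublinear functional of the cost, and the Riesz–Markov–Kakutani theorem.
-/

open scoped NNReal

section Sublinear

variable {E : Type*} [AddCommGroup E] [Module ℝ E]

theorem exists_linearMap_le_sublinear_apply_eq (N : E → ℝ)
    (N_hom : ∀ c : ℝ, 0 < c → ∀ x, N (c • x) = c * N x)
    (N_add : ∀ x y, N (x + y) ≤ N x + N y) (x : E) :
    ∃ Λ : E →ₗ[ℝ] ℝ, (∀ y, Λ y ≤ N y) ∧ Λ x = N x := by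
  have N_zero : N 0 = 0 := by
    have := N_hom 2 two_pos 0
    rw [smul_zero] at this
    linarith
  have smul_le (c : ℝ) : c * N x ≤ N (c • x) := by
    rcases lt_trichotomy c 0 with hc | rfl | hc
    · have hneg : N (-(c • x)) = -c * N x := by rw [← neg_smul, N_hom _ (neg_pos.2 hc)]
      have := N_add (c • x) (-(c • x))
      rw [add_neg_cancel, N_zero, hneg] at this
      linarith
    · simp [N_zero]
    · exact (N_hom c hc x).ge
  have well_defined (c : ℝ) (hc : c • x = 0) : c • N x = 0 := by
    rcases smul_eq_zero.1 hc with rfl | rfl <;> simp [N_zero]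
  obtain ⟨Λ, Λ_eq, Λ_le⟩ := exists_extension_of_le_sublinear
    (LinearPMap.mkSpanSingleton' x (N x) well_defined) N N_hom N_add (by
      rintro ⟨_, hy⟩
      obtain ⟨c, rfl⟩ := Submodule.mem_span_singleton.1 hy
      rw [LinearPMap.mkSpanSingleton'_apply]
      exact smul_le c)
  exact ⟨Λ, Λ_le, (Λ_eq ⟨x, Submodule.mem_span_singleton_self x⟩).trans
    (LinearPMap.mkSpanSingleton'_apply_self ..)⟩

end Sublinear

section CompactSpace

variable {X : Type*} [TopologicalSpace X] [CompactSpace X] [MeasurableSpace X]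

lemma integrable_of_continuous_of_compactSpace {E : Type*} [NormedAddCommGroup E]
    [OpensMeasurableSpace X] {μ : Measure X} [IsFiniteMeasureOnCompacts μ]
    {f : X → E} (hf : Continuous f) : Integrable f μ :=
  hf.integrable_of_hasCompactSupport (.of_compactSpace f)

theorem exists_measure_forall_integral_eq [T2Space X] [BorelSpace X] (Λ : C(X, ℝ) →ₗ[ℝ] ℝ)
    (Λ_nonneg : ∀ f, 0 ≤ f → 0 ≤ Λ f) :
    ∃ γ : Measure X, IsFiniteMeasure γ ∧ ∀ f : C(X, ℝ), ∫ x, f x ∂γ = Λ f := by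
  let L : CompactlySupportedContinuousMap X ℝ →ₚ[ℝ] ℝ := PositiveLinearMap.mk₀
    { toFun := fun f => Λ f.toContinuousMap
      map_add' := fun _ _ => Λ.map_add _ _
      map_smul' := fun _ _ => Λ.map_smul _ _ } fun f hf => Λ_nonneg _ hf
  exact ⟨RealRMK.rieszMeasure L, inferInstance, fun f =>
    RealRMK.integral_rieszMeasure L ⟨f, .of_compactSpace f⟩⟩

end CompactSpace

lemma map_eq_of_forall_integral_comp_eq {X Z : Type*} [TopologicalSpace X] [HasOuterApproxClosed X]
    [MeasurableSpace X] [BorelSpace X] [TopologicalSpace Z] [MeasurableSpace Z]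
    [OpensMeasurableSpace Z] {γ : Measure Z} [IsFiniteMeasure γ] {μ : Measure X} [IsFiniteMeasure μ]
    (p : C(Z, X)) (h : ∀ φ : C(X, ℝ), ∫ z, φ (p z) ∂γ = ∫ x, φ x ∂μ) : γ.map p = μ := by
  have := γ.isFiniteMeasure_map p
  refine ext_of_forall_integral_eq_of_IsFiniteMeasure fun φ => ?_
  rw [integral_map p.continuous.measurable.aemeasurable φ.continuous.aestronglyMeasurable]
  exact h φ.toContinuousMap

section Coupling

variable {α β : Type*} [MeasurableSpace α] [MeasurableSpace β]

lemma exists_isProbabilityMeasure_map_subtype_coe_eq {μ : Measure α} [IsProbabilityMeasure μ]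
    {K : Set α} (hK : MeasurableSet K) (hμ : μ Kᶜ = 0) :
    ∃ μK : Measure K, IsProbabilityMeasure μK ∧ μK.map Subtype.val = μ := by
  have map_comap : (μ.comap (Subtype.val : K → α)).map Subtype.val = μ := by
    rw [map_comap_subtype_coe hK]
    exact Measure.restrict_eq_self_of_ae_mem (mem_ae_iff.2 hμ)
  refine ⟨_, (Measure.isProbabilityMeasure_map_iff measurable_subtype_coe.aemeasurable).1 ?_,
    map_comap⟩
  rwa [map_comap]

lemma IsCoupling.map {γ : Measure (α × α)} {μ ν : Measure α} (h : IsCoupling γ μ ν) {f : α → β}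
    (hf : Measurable f) : IsCoupling (γ.map (Prod.map f f)) (μ.map f) (ν.map f) := by
  have hff : Measurable (Prod.map f f) := hf.prodMap hf
  constructor
  · rw [Measure.map_map measurable_fst hff, ← h.1, Measure.map_map hf measurable_fst]
    rfl
  · rw [Measure.map_map measurable_snd hff, ← h.2, Measure.map_map hf measurable_snd]
    rfl

end Coupling

section Duality

variable {X Y : Type*}
  [TopologicalSpace X] [CompactSpace X] [SecondCountableTopology X] [MeasurableSpace X]
  [BorelSpace X]
  [TopologicalSpace Y] [CompactSpace Y] [SecondCountableTopology Y] [MeasurableSpace Y]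
  [BorelSpace Y]
  {μ : Measure X} {ν : Measure Y}

/-- The pairs of potentials `(φ, ψ)` with `h (x, y) ≤ φ x + ψ y` for all `x` and `y`. -/
def dominatingPotentials (h : C(X × Y, ℝ)) : Set (C(X, ℝ) × C(Y, ℝ)) :=
  {p | ∀ x y, h (x, y) ≤ p.1 x + p.2 y}

/-- The least value of `∫ φ dμ + ∫ ψ dν` among potentials dominating `h`: the value of the dual
Kantorovich problem, as a sublinear functional of `h`. It equals the largest integral of `h` against
a coupling of `μ` and `ν`. -/
def dualValue (μ : Measure X) (ν : Measure Y) (h : C(X × Y, ℝ)) : ℝ :=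
  ⨅ p : dominatingPotentials h, (∫ x, p.1.1 x ∂μ + ∫ y, p.1.2 y ∂ν)

instance (h : C(X × Y, ℝ)) : Nonempty (dominatingPotentials h) :=
  ⟨(.const X ‖h‖, 0), fun x y => by
    simpa using (le_abs_self _).trans (h.norm_coe_le_norm (x, y))⟩

section

variable [IsProbabilityMeasure μ] [IsProbabilityMeasure ν]

lemma integral_prod_le_of_mem_dominatingPotentials {h : C(X × Y, ℝ)} {p : C(X, ℝ) × C(Y, ℝ)}
    (hp : p ∈ dominatingPotentials h) :
    ∫ z, h z ∂μ.prod ν ≤ ∫ x, p.1 x ∂μ + ∫ y, p.2 y ∂ν := by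
  have integrable_fst : Integrable (fun z : X × Y => p.1 z.1) (μ.prod ν) :=
    integrable_of_continuous_of_compactSpace (by fun_prop)
  have integrable_snd : Integrable (fun z : X × Y => p.2 z.2) (μ.prod ν) :=
    integrable_of_continuous_of_compactSpace (by fun_prop)
  calc ∫ z, h z ∂μ.prod ν ≤ ∫ z, (p.1 z.1 + p.2 z.2) ∂μ.prod ν :=
        integral_mono (integrable_of_continuous_of_compactSpace h.continuous)
          (integrable_fst.add integrable_snd) fun z => hp z.1 z.2
    _ = ∫ x, p.1 x ∂μ + ∫ y, p.2 y ∂ν := by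
        rw [integral_add integrable_fst integrable_snd, integral_fun_fst, integral_fun_snd]
        simp

lemma dualValue_le {h : C(X × Y, ℝ)} {φ : C(X, ℝ)} {ψ : C(Y, ℝ)}
    (hp : ∀ x y, h (x, y) ≤ φ x + ψ y) : dualValue μ ν h ≤ ∫ x, φ x ∂μ + ∫ y, ψ y ∂ν :=
  ciInf_le ⟨∫ z, h z ∂μ.prod ν, by
    rintro _ ⟨p, rfl⟩
    exact integral_prod_le_of_mem_dominatingPotentials p.2⟩
    (⟨(φ, ψ), hp⟩ : dominatingPotentials h)

lemma dualValue_smul_le {c : ℝ} (hc : 0 < c) (h : C(X × Y, ℝ)) :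
    dualValue μ ν (c • h) ≤ c * dualValue μ ν h := by
  rw [← div_le_iff₀' hc]
  refine le_ciInf fun ⟨(φ, ψ), hp⟩ => ?_
  rw [div_le_iff₀' hc]
  calc dualValue μ ν (c • h) ≤ ∫ x, (c • φ) x ∂μ + ∫ y, (c • ψ) y ∂ν :=
        dualValue_le fun x y => by
          simpa [mul_add] using mul_le_mul_of_nonneg_left (hp x y) hc.le
    _ = c * (∫ x, φ x ∂μ + ∫ y, ψ y ∂ν) := by
        simp only [ContinuousMap.smul_apply, smul_eq_mul, integral_const_mul, mul_add]

lemma dualValue_smul {c : ℝ} (hc : 0 < c) (h : C(X × Y, ℝ)) :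
    dualValue μ ν (c • h) = c * dualValue μ ν h := by
  refine le_antisymm (dualValue_smul_le hc h) ?_
  have := dualValue_smul_le (μ := μ) (ν := ν) (inv_pos.2 hc) (c • h)
  rwa [inv_smul_smul₀ hc.ne', ← div_eq_inv_mul, le_div_iff₀' hc] at this

lemma dualValue_add_le (h k : C(X × Y, ℝ)) :
    dualValue μ ν (h + k) ≤ dualValue μ ν h + dualValue μ ν k := by
  refine le_ciInf_add_ciInf fun ⟨(φ, ψ), hp⟩ ⟨(φ', ψ'), hp'⟩ => ?_
  calc dualValue μ ν (h + k) ≤ ∫ x, (φ + φ') x ∂μ + ∫ y, (ψ + ψ') y ∂ν :=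
        dualValue_le fun x y => by
          simpa [add_add_add_comm] using add_le_add (hp x y) (hp' x y)
    _ = (∫ x, φ x ∂μ + ∫ y, ψ y ∂ν) + (∫ x, φ' x ∂μ + ∫ y, ψ' y ∂ν) := by
        simp only [ContinuousMap.add_apply]
        rw [integral_add, integral_add, add_add_add_comm] <;>
          exact integrable_of_continuous_of_compactSpace (ContinuousMap.continuous _)

lemma apply_nonneg_of_le_dualValue {Λ : C(X × Y, ℝ) →ₗ[ℝ] ℝ}
    (Λ_le : ∀ h, Λ h ≤ dualValue μ ν h) {h : C(X × Y, ℝ)} (hh : 0 ≤ h) : 0 ≤ Λ h := by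
  have : Λ (-h) ≤ ∫ x, (0 : C(X, ℝ)) x ∂μ + ∫ y, (0 : C(Y, ℝ)) y ∂ν :=
    (Λ_le _).trans (dualValue_le fun x y => by simpa using hh (x, y))
  simpa using this

lemma apply_eq_of_le_dualValue {Λ : C(X × Y, ℝ) →ₗ[ℝ] ℝ}
    (Λ_le : ∀ h, Λ h ≤ dualValue μ ν h) {h : C(X × Y, ℝ)} {φ : C(X, ℝ)} {ψ : C(Y, ℝ)}
    (hp : ∀ x y, h (x, y) = φ x + ψ y) : Λ h = ∫ x, φ x ∂μ + ∫ y, ψ y ∂ν := by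
  refine le_antisymm ((Λ_le h).trans (dualValue_le fun x y => (hp x y).le)) ?_
  have : Λ (-h) ≤ ∫ x, (-φ) x ∂μ + ∫ y, (-ψ) y ∂ν :=
    (Λ_le _).trans (dualValue_le fun x y => by simp [hp, add_comm])
  simp only [map_neg, ContinuousMap.neg_apply, integral_neg] at this
  linarith

end

theorem kantorovich_duality [T2Space X] [T2Space Y] [IsProbabilityMeasure μ]
    [IsProbabilityMeasure ν] (c : C(X × Y, ℝ)) {C : ℝ}
    (hC : ∀ (φ : C(X, ℝ)) (ψ : C(Y, ℝ)), (∀ x y, φ x + ψ y ≤ c (x, y)) →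
      ∫ x, φ x ∂μ + ∫ y, ψ y ∂ν ≤ C) :
    ∃ γ : Measure (X × Y), IsFiniteMeasure γ ∧ γ.map Prod.fst = μ ∧ γ.map Prod.snd = ν ∧
      ∫ z, c z ∂γ ≤ C := by
  obtain ⟨Λ, Λ_le, Λ_neg_c⟩ := exists_linearMap_le_sublinear_apply_eq (dualValue μ ν)
    (fun _ => dualValue_smul) dualValue_add_le (-c)
  obtain ⟨γ, γ_finite, integral_γ⟩ := exists_measure_forall_integral_eq Λ
    fun _ => apply_nonneg_of_le_dualValue Λ_le
  have neg_C_le : -C ≤ dualValue μ ν (-c) := le_ciInf fun ⟨(φ, ψ), hp⟩ => by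
    have := hC (-φ) (-ψ) fun x y => by
      have := hp x y
      simp only [ContinuousMap.neg_apply] at this ⊢
      linarith
    simp only [ContinuousMap.neg_apply, integral_neg] at this
    linarith
  refine ⟨γ, γ_finite, ?_, ?_, ?_⟩
  · refine map_eq_of_forall_integral_comp_eq .fst fun φ => ?_
    simpa using (integral_γ (φ.comp .fst)).trans
      (apply_eq_of_le_dualValue Λ_le (φ := φ) (ψ := 0) fun x y => by simp)
  · refine map_eq_of_forall_integral_comp_eq .snd fun ψ => ?_
    simpa using (integral_γ (ψ.comp .snd)).trans
      (apply_eq_of_le_dualValue Λ_le (φ := 0) (ψ := ψ) fun x y => by simp)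
  · rw [map_neg] at Λ_neg_c
    rw [integral_γ]
    linarith

end Duality

-- The witness is the `c`-transform `x ↦ inf_y (dist x y - ψ y)` for the cost `dist`.
lemma exists_lipschitzWith_one_between {E : Type*} [PseudoMetricSpace E] {K : Set E}
    [CompactSpace K] [Nonempty K] {φ ψ : C(K, ℝ)} (h : ∀ x y, φ x + ψ y ≤ dist x y) :
    ∃ f : E → ℝ, LipschitzWith 1 f ∧ ∀ x : K, φ x ≤ f x ∧ f x ≤ -ψ x := by
  let f : E → ℝ := fun x => ⨅ y : K, (dist x y - ψ y)
  have bddBelow (x : E) : BddBelow (Set.range fun y : K => dist x y - ψ y) := by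
    refine ⟨-‖ψ‖, ?_⟩
    rintro _ ⟨y, rfl⟩
    have := (le_abs_self _).trans (ψ.norm_coe_le_norm y)
    linarith [dist_nonneg (x := x) (y := (y : E))]
  refine ⟨f, .of_le_add fun x x' => ?_, fun x => ⟨?_, ?_⟩⟩
  · rw [← sub_le_iff_le_add]
    refine le_ciInf fun y => ?_
    linarith [ciInf_le (bddBelow x) y, dist_triangle x x' y]
  · exact le_ciInf fun y => le_sub_iff_add_le.2 (h x y)
  · simpa using ciInf_le (bddBelow x) x

section KantorovichRubinstein

variable {E : Type*} [MetricSpace E] [MeasurableSpace E] [BorelSpace E] {K : Set E} {C : ℝ}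

lemma integral_add_integral_le_of_forall_lipschitzWith [CompactSpace K] {μ ν : Measure K}
    [IsProbabilityMeasure μ] [IsProbabilityMeasure ν]
    (hC : ∀ f : E → ℝ, LipschitzWith 1 f → ∫ x : K, f x ∂μ - ∫ x : K, f x ∂ν ≤ C)
    (φ ψ : C(K, ℝ)) (h : ∀ x y, φ x + ψ y ≤ dist x y) :
    ∫ x, φ x ∂μ + ∫ x, ψ x ∂ν ≤ C := by
  have : Nonempty K := nonempty_of_isProbabilityMeasure μ
  obtain ⟨f, f_lipschitz, hf⟩ := exists_lipschitzWith_one_between h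
  have f_continuous : Continuous fun x : K => f x :=
    f_lipschitz.continuous.comp continuous_subtype_val
  have φ_le : ∫ x, φ x ∂μ ≤ ∫ x : K, f x ∂μ :=
    integral_mono (integrable_of_continuous_of_compactSpace φ.continuous)
      (integrable_of_continuous_of_compactSpace f_continuous) fun x => (hf x).1
  have le_neg_ψ : ∫ x : K, f x ∂ν ≤ ∫ x, -ψ x ∂ν :=
    integral_mono (integrable_of_continuous_of_compactSpace f_continuous)
      (integrable_of_continuous_of_compactSpace ψ.continuous).neg fun x => (hf x).2
  rw [integral_neg] at le_neg_ψ
  linarith [hC f f_lipschitz]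

theorem kantorovich_rubinstein {μ ν : Measure E} [IsProbabilityMeasure μ] [IsProbabilityMeasure ν]
    (hK : IsCompact K) (hμ : μ Kᶜ = 0) (hν : ν Kᶜ = 0)
    (hC : ∀ f : E → ℝ, LipschitzWith 1 f → ∫ x, f x ∂μ - ∫ x, f x ∂ν ≤ C) :
    ∃ γ : Measure (E × E), IsCoupling γ μ ν ∧ ∫⁻ z, edist z.1 z.2 ∂γ ≤ ENNReal.ofReal C := by
  have := isCompact_iff_compactSpace.1 hK
  obtain ⟨μK, _, rfl⟩ := exists_isProbabilityMeasure_map_subtype_coe_eq hK.measurableSet hμ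
  obtain ⟨νK, _, rfl⟩ := exists_isProbabilityMeasure_map_subtype_coe_eq hK.measurableSet hν
  simp only [(MeasurableEmbedding.subtype_coe hK.measurableSet).integral_map] at hC
  obtain ⟨γ, _, γ_fst, γ_snd, γ_le⟩ := kantorovich_duality
    ⟨fun z : K × K => dist z.1 z.2, by fun_prop⟩
    (integral_add_integral_le_of_forall_lipschitzWith hC)
  refine ⟨_, IsCoupling.map ⟨γ_fst, γ_snd⟩ measurable_subtype_coe, ?_⟩
  calc ∫⁻ z, edist z.1 z.2 ∂γ.map (Prod.map Subtype.val Subtype.val)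
      ≤ ∫⁻ z : K × K, ENNReal.ofReal (dist z.1 z.2) ∂γ := by
        simpa only [← edist_dist] using! lintegral_map_le _ _
    _ = ENNReal.ofReal (∫ z : K × K, dist z.1 z.2 ∂γ) :=
        (ofReal_integral_eq_lintegral_ofReal
          (integrable_of_continuous_of_compactSpace (by fun_prop))
          (ae_of_all _ fun _ => dist_nonneg)).symm
    _ ≤ ENNReal.ofReal C := ENNReal.ofReal_le_ofReal γ_le

end KantorovichRubinstein

open UnitAddTorus
open scoped Convolution

lemma exists_continuousMap_support_subset_ball_integral_eq_one {G : Type*}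
    [SeminormedAddCommGroup G] [CompactSpace G] [MeasurableSpace G] [BorelSpace G] (μ : Measure G)
    [IsFiniteMeasureOnCompacts μ] [μ.IsOpenPosMeasure] {ε : ℝ} (hε : 0 < ε) :
    ∃ k : C(G, ℝ), Function.support k ⊆ Metric.ball 0 ε ∧ (∀ t, 0 ≤ k t) ∧ ∫ t, k t ∂μ = 1 := by
  let h : C(G, ℝ) := ⟨fun t => max 0 (ε - ‖t‖), by fun_prop⟩
  have h_nonneg (t : G) : 0 ≤ h t := le_max_left ..
  have integral_h_pos : 0 < ∫ t, h t ∂μ :=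
    h.continuous.integral_pos_of_hasCompactSupport_nonneg_nonzero (x := 0) (.of_compactSpace _)
      h_nonneg (by simpa [h] using hε)
  refine ⟨(∫ t, h t ∂μ)⁻¹ • h, fun t ht => ?_, fun t => ?_, ?_⟩
  · by_contra ht'
    rw [mem_ball_zero_iff, not_lt] at ht'
    exact ht (by simp [h, ht'])
  · exact mul_nonneg (inv_nonneg.2 integral_h_pos.le) (h_nonneg t)
  · simp only [ContinuousMap.smul_apply, smul_eq_mul, integral_const_mul]
    exact inv_mul_cancel₀ integral_h_pos.ne'

section CoveringMap

variable {ι : Type*}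

/-- The covering map of the unit torus by Euclidean space. -/
def toTorus (x : EuclideanSpace ℝ ι) : UnitAddTorus ι := fun i => (x i : UnitAddCircle)

lemma toTorus_surjective : Function.Surjective (toTorus (ι := ι)) := fun t => by
  choose x hx using fun i => QuotientAddGroup.mk_surjective (t i)
  exact ⟨WithLp.toLp 2 x, funext hx⟩

lemma continuous_toTorus : Continuous (toTorus (ι := ι)) :=
  continuous_pi fun i => continuous_quotient_mk'.comp (EuclideanSpace.proj i).continuous

lemma toTorus_zero : toTorus (0 : EuclideanSpace ℝ ι) = 0 := rfl

lemma toTorus_add (x y : EuclideanSpace ℝ ι) : toTorus (x + y) = toTorus x + toTorus y := rfl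

lemma mFourier_toTorus [Fintype ι] (n : ι → ℤ) (x : EuclideanSpace ℝ ι) :
    mFourier n (toTorus x) = Complex.exp (2 * π * Complex.I * ∑ i, (n i : ℂ) * x i) := by
  simp only [mFourier, ContinuousMap.coe_mk, toTorus, fourier_coe_apply, Finset.mul_sum,
    Complex.exp_sum]
  simp [mul_assoc]

/-- The derivative of a function on the torus in the direction `v`, with the junk value `0` at
points where it does not exist. -/
def torusLineDeriv (u : UnitAddTorus ι → ℝ) (v : EuclideanSpace ℝ ι) (t : UnitAddTorus ι) : ℝ :=
  lineDeriv ℝ (fun y => u (t + toTorus y)) 0 v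

lemma measurable_torusLineDeriv [Finite ι] (u : C(UnitAddTorus ι, ℝ)) (v : EuclideanSpace ℝ ι) :
    Measurable (torusLineDeriv u v) := by
  cases nonempty_fintype ι
  have : Continuous (Function.uncurry fun (t : UnitAddTorus ι) (h : ℝ) =>
      u (t + toTorus (0 + h • v))) :=
    u.continuous.comp (continuous_fst.add (continuous_toTorus.comp (by fun_prop)))
  exact (measurable_deriv_with_param this).comp (measurable_id.prodMk measurable_const)

end CoveringMap

section Folding

variable {ι : Type*}

/-- The point of the unit torus with angles `x i`, measured modulo `2π`. -/
def angleToTorus (x : ι → ℝ) : UnitAddTorus ι := toTorus (WithLp.toLp 2 ((2 * π)⁻¹ • x))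

/-- The folding map of the torus onto the cube `[0, π]^ι`. In the angular coordinates of
`angleToTorus`, composing a function on the cube with it is the extension that is even and
`2π`-periodic in each variable. -/
def foldTorus (t : UnitAddTorus ι) : EuclideanSpace ℝ ι := WithLp.toLp 2 fun i => 2 * π * ‖t i‖

lemma continuous_angleToTorus : Continuous (angleToTorus (ι := ι)) :=
  continuous_toTorus.comp ((PiLp.continuous_toLp 2 _).comp (continuous_const_smul _))

lemma continuous_foldTorus : Continuous (foldTorus (ι := ι)) := by
  unfold foldTorus
  fun_prop

lemma foldTorus_angleToTorus {x : ι → ℝ} (hx : ∀ i, x i ∈ Set.Icc 0 π) :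
    foldTorus (angleToTorus x) = WithLp.toLp 2 x := by
  ext i
  have abs_le_half : |(2 * π)⁻¹ * x i| ≤ 1 / 2 := by
    rw [abs_of_nonneg (mul_nonneg (by positivity) (hx i).1), inv_mul_le_iff₀ two_pi_pos]
    linarith [(hx i).2]
  calc 2 * π * ‖(((2 * π)⁻¹ * x i : ℝ) : UnitAddCircle)‖
      = 2 * π * ((2 * π)⁻¹ * x i) := by
        rw [(AddCircle.norm_coe_eq_abs_iff 1 one_ne_zero).2 (by simpa using abs_le_half),
          abs_of_nonneg (mul_nonneg (by positivity) (hx i).1)]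
    _ = x i := mul_inv_cancel_left₀ two_pi_pos.ne' _

lemma lipschitzWith_foldTorus_comp_toTorus [Fintype ι] :
    LipschitzWith (2 * NNReal.pi) (foldTorus (ι := ι) ∘ toTorus) := by
  refine .of_dist_le_mul fun x y => ?_
  have abs_norm_sub_le (i : ι) : |‖toTorus x i‖ - ‖toTorus y i‖| ≤ |x i - y i| :=
    (abs_norm_sub_norm_le _ _).trans (QuotientAddGroup.norm_mk_le_norm (m := x i - y i))
  calc dist (foldTorus (toTorus x)) (foldTorus (toTorus y))
      = 2 * π * √(∑ i, |‖toTorus x i‖ - ‖toTorus y i‖| ^ 2) := by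
        simp only [foldTorus, EuclideanSpace.dist_eq, Real.dist_eq, ← mul_sub, abs_mul _ (_ - _),
          mul_pow _ |_|, ← Finset.mul_sum, sqrt_mul (sq_nonneg _), sqrt_sq_eq_abs,
          abs_of_pos two_pi_pos]
    _ ≤ 2 * π * dist x y := by
        rw [EuclideanSpace.dist_eq]
        gcongr
        exact abs_norm_sub_le _

lemma integral_comp_toLp_eq_integral_map_angleToTorus [Countable ι]
    {μ : Measure (ι → ℝ)} {f : EuclideanSpace ℝ ι → ℝ} (hf : Continuous f)
    (hμ : ∀ᵐ x ∂μ, ∀ i, x i ∈ Set.Icc 0 π) :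
    ∫ x, f (WithLp.toLp 2 x) ∂μ = ∫ t, f (foldTorus t) ∂μ.map angleToTorus := by
  rw [integral_map continuous_angleToTorus.aemeasurable
    (f := fun t => f (foldTorus t)) (hf.comp continuous_foldTorus).aestronglyMeasurable]
  exact integral_congr_ae
    (hμ.mono fun x hx => by simp only [foldTorus_angleToTorus hx])

end Folding

section Torus

attribute [local instance] instMeasureSpaceUnitAddCircle
  instIsAddHaarMeasureUnitAddCircleVolume instIsProbabilityMeasureUnitAddCircleVolume

variable {ι : Type*} [Fintype ι]

lemma norm_mFourier_apply (n : ι → ℤ) (x : UnitAddTorus ι) : ‖mFourier n x‖ = 1 := by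
  simp only [mFourier, ContinuousMap.coe_mk, norm_prod, fourier_apply, Circle.norm_coe,
    Finset.prod_const_one]

lemma mFourier_apply_add (n : ι → ℤ) (x y : UnitAddTorus ι) :
    mFourier n (x + y) = mFourier n x * mFourier n y := by
  simp only [mFourier, ContinuousMap.coe_mk, Pi.add_apply, fourier_apply, smul_add,
    AddCircle.toCircle_add, Circle.coe_mul, Finset.prod_mul_distrib]

lemma integrable_mFourier_mul (n : ι → ℤ) {f : UnitAddTorus ι → ℂ} (hf : Integrable f) :
    Integrable fun t => mFourier n t * f t :=
  hf.bdd_mul (mFourier n).continuous.aestronglyMeasurable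
    (ae_of_all _ fun t => (norm_mFourier_apply n t).le)

lemma mFourierCoeff_convolution {f g : UnitAddTorus ι → ℂ} (hf : Integrable f) (hg : Integrable g)
    (n : ι → ℤ) :
    mFourierCoeff (f ⋆[ContinuousLinearMap.mul ℂ ℂ] g) n =
      mFourierCoeff f n * mFourierCoeff g n := by
  have character_mul_convolution (x : UnitAddTorus ι) :
      mFourier (-n) x * (f ⋆[ContinuousLinearMap.mul ℂ ℂ] g) x =
        ((fun t => mFourier (-n) t * f t) ⋆[ContinuousLinearMap.mul ℂ ℂ]
          fun t => mFourier (-n) t * g t) x := by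
    simp only [convolution_mul, ← integral_const_mul]
    congr 1 with t
    conv_lhs => rw [← add_sub_cancel t x, mFourier_apply_add, add_sub_cancel]
    ring
  simp only [mFourierCoeff, smul_eq_mul, character_mul_convolution]
  exact integral_convolution _ (integrable_mFourier_mul _ hf) (integrable_mFourier_mul _ hg)

lemma norm_mFourierCoeff_le_integral_norm (f : UnitAddTorus ι → ℂ) (n : ι → ℤ) :
    ‖mFourierCoeff f n‖ ≤ ∫ t, ‖f t‖ := by
  simpa [mFourierCoeff, norm_mFourier_apply] using
    norm_integral_le_integral_norm fun t => mFourier (-n) t • f t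

lemma hasSum_sq_mFourierCoeff_of_memLp {f : UnitAddTorus ι → ℂ} (hf : MemLp f 2) :
    HasSum (fun n => ‖mFourierCoeff f n‖ ^ 2) (∫ t, ‖f t‖ ^ 2) := by
  have coeff_toLp (n : ι → ℤ) : mFourierCoeff (hf.toLp f) n = mFourierCoeff f n :=
    integral_congr_ae (hf.coeFn_toLp.mono fun t ht => by simp only [ht])
  have integral_toLp : ∫ t, ‖hf.toLp f t‖ ^ 2 = ∫ t, ‖f t‖ ^ 2 :=
    integral_congr_ae (hf.coeFn_toLp.mono fun t ht => by simp only [ht])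
  simpa only [coeff_toLp, integral_toLp] using hasSum_sq_mFourierCoeff (hf.toLp f)

lemma summable_sq_norm_mFourierCoeff (f : C(UnitAddTorus ι, ℂ)) :
    Summable fun n => ‖mFourierCoeff f n‖ ^ 2 :=
  (hasSum_sq_mFourierCoeff_of_memLp
    (f.continuous.memLp_of_hasCompactSupport (.of_compactSpace f))).summable

lemma summable_mFourierCoeff_convolution (f g : C(UnitAddTorus ι, ℂ)) :
    Summable (mFourierCoeff (f ⋆[ContinuousLinearMap.mul ℂ ℂ] g)) := by
  refine .of_norm_bounded
    ((summable_sq_norm_mFourierCoeff f).add (summable_sq_norm_mFourierCoeff g)) fun n => ?_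
  rw [mFourierCoeff_convolution (integrable_of_continuous_of_compactSpace f.continuous)
    (integrable_of_continuous_of_compactSpace g.continuous), norm_mul]
  nlinarith [two_mul_le_add_sq ‖mFourierCoeff f n‖ ‖mFourierCoeff g n‖,
    norm_nonneg (mFourierCoeff f n), norm_nonneg (mFourierCoeff g n)]

theorem exists_summable_mFourierCoeff_norm_sub_le (U : C(UnitAddTorus ι, ℂ)) {ε : ℝ} (hε : 0 < ε) :
    ∃ V : C(UnitAddTorus ι, ℂ), Summable (mFourierCoeff V) ∧
      (∀ n, ‖mFourierCoeff V n‖ ≤ ‖mFourierCoeff U n‖) ∧ ∀ x, ‖V x - U x‖ ≤ ε := by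
  obtain ⟨δ, hδ, hU⟩ := Metric.uniformContinuous_iff.1
    (CompactSpace.uniformContinuous_of_continuous U.continuous) ε hε
  obtain ⟨k, k_support, k_nonneg, integral_k⟩ :=
    exists_continuousMap_support_subset_ball_integral_eq_one
      (volume : Measure (UnitAddTorus ι)) hδ
  let kℂ : C(UnitAddTorus ι, ℂ) := ⟨fun t => (k t : ℂ), by fun_prop⟩
  have norm_coeff_kℂ (n : ι → ℤ) : ‖mFourierCoeff kℂ n‖ ≤ 1 := by
    refine (norm_mFourierCoeff_le_integral_norm kℂ n).trans_eq ?_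
    simpa [kℂ, abs_of_nonneg (k_nonneg _)] using integral_k
  have kℂ_integrable : Integrable kℂ := integrable_of_continuous_of_compactSpace kℂ.continuous
  have U_integrable : Integrable U := integrable_of_continuous_of_compactSpace U.continuous
  refine ⟨⟨kℂ ⋆[ContinuousLinearMap.mul ℂ ℂ] U,
    (HasCompactSupport.of_compactSpace U).continuous_convolution_right _
      kℂ_integrable.locallyIntegrable U.continuous⟩,
    summable_mFourierCoeff_convolution kℂ U, fun n => ?_, fun x => ?_⟩
  · rw [ContinuousMap.coe_mk, mFourierCoeff_convolution kℂ_integrable U_integrable, norm_mul]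
    exact mul_le_of_le_one_left (norm_nonneg _) (norm_coeff_kℂ n)
  · rw [← dist_eq_norm]
    simpa [convolution_def, kℂ] using dist_convolution_le hε.le k_support k_nonneg integral_k
      U.continuous.aestronglyMeasurable fun y hy => (hU hy).le

/-- The Fourier–Stieltjes coefficients of a measure on the unit torus, with the sign convention of
`fourierStieltjes` rather than that of `mFourierCoeff`. -/
def torusFourierStieltjes (μ : Measure (UnitAddTorus ι)) (n : ι → ℤ) : ℂ := ∫ x, mFourier n x ∂μ

lemma torusFourierStieltjes_zero (μ : Measure (UnitAddTorus ι)) [IsProbabilityMeasure μ] :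
    torusFourierStieltjes μ 0 = 1 := by
  simp [torusFourierStieltjes, mFourier_zero]

lemma hasSum_mFourierCoeff_mul_torusFourierStieltjes {V : C(UnitAddTorus ι, ℂ)}
    (hV : Summable (mFourierCoeff V)) (μ : Measure (UnitAddTorus ι)) [IsFiniteMeasure μ] :
    HasSum (fun n => mFourierCoeff V n * torusFourierStieltjes μ n) (∫ x, V x ∂μ) := by
  have hasSum_integral := hasSum_integral_of_summable_integral_norm (μ := μ)
    (F := fun n x => mFourierCoeff V n * mFourier n x)
    (fun n => integrable_of_continuous_of_compactSpace (by fun_prop))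
    (by simpa [norm_mFourier_apply] using hV.norm.mul_left (μ.real Set.univ))
  simp only [integral_const_mul] at hasSum_integral
  simpa only [torusFourierStieltjes, ← smul_eq_mul,
    (hasSum_mFourier_series_apply_of_summable hV _).tsum_eq] using hasSum_integral

section FourierPairing

variable {μ ν : Measure (UnitAddTorus ι)} [IsProbabilityMeasure μ] [IsProbabilityMeasure ν]
  {A B : ℝ}

lemma sum_intCast_sq_ne_zero {m : ι → ℤ} (hm : m ≠ 0) : ∑ i, (m i : ℝ) ^ 2 ≠ 0 := by
  contrapose! hm
  ext i
  simpa using (Finset.sum_eq_zero_iff_of_nonneg fun i _ => sq_nonneg _).1 hm i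

lemma sq_norm_sum_mul_le (a c : (ι → ℤ) → ℂ) (hc : c 0 = 0) (F : Finset (ι → ℤ)) :
    ‖∑ m ∈ F, a m * c m‖ ^ 2 ≤ (∑ m ∈ F, (∑ i, (m i : ℝ) ^ 2) * ‖a m‖ ^ 2) *
      ∑ m ∈ F, ‖c m‖ ^ 2 / ∑ i, (m i : ℝ) ^ 2 := by
  calc ‖∑ m ∈ F, a m * c m‖ ^ 2 ≤ (∑ m ∈ F, ‖a m * c m‖) ^ 2 := by
        gcongr
        exact norm_sum_le _ _
    _ ≤ _ := by
        refine Finset.sum_sq_le_sum_mul_sum_of_sq_le_mul F (fun m _ => by positivity)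
          (fun m _ => by positivity) fun m _ => ?_
        rcases eq_or_ne m 0 with rfl | hm
        · simp [hc]
        · have := sum_intCast_sq_ne_zero hm
          rw [norm_mul]
          field_simp
          rfl

lemma sq_norm_integral_sub_integral_le_of_summable {V : C(UnitAddTorus ι, ℂ)}
    (hV : Summable (mFourierCoeff V))
    (hA : ∀ F : Finset (ι → ℤ), ∑ m ∈ F, (∑ i, (m i : ℝ) ^ 2) * ‖mFourierCoeff V m‖ ^ 2 ≤ A)
    (hB : ∀ F : Finset (ι → ℤ), ∑ m ∈ F,
      ‖torusFourierStieltjes μ m - torusFourierStieltjes ν m‖ ^ 2 / ∑ i, (m i : ℝ) ^ 2 ≤ B) :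
    ‖∫ x, V x ∂μ - ∫ x, V x ∂ν‖ ^ 2 ≤ A * B := by
  have hasSum_sub := (hasSum_mFourierCoeff_mul_torusFourierStieltjes hV μ).sub
    (hasSum_mFourierCoeff_mul_torusFourierStieltjes hV ν)
  refine le_of_tendsto (hasSum_sub.norm.pow 2) (.of_forall fun F => ?_)
  simp only [← mul_sub]
  refine (sq_norm_sum_mul_le _ _ (by simp [torusFourierStieltjes_zero]) F).trans
    (mul_le_mul (hA F) (hB F) (by positivity) (by simpa using hA ∅))

theorem norm_integral_sub_integral_le_sqrt (U : C(UnitAddTorus ι, ℂ))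
    (hA : ∀ F : Finset (ι → ℤ), ∑ m ∈ F, (∑ i, (m i : ℝ) ^ 2) * ‖mFourierCoeff U m‖ ^ 2 ≤ A)
    (hB : ∀ F : Finset (ι → ℤ), ∑ m ∈ F,
      ‖torusFourierStieltjes μ m - torusFourierStieltjes ν m‖ ^ 2 / ∑ i, (m i : ℝ) ^ 2 ≤ B) :
    ‖∫ x, U x ∂μ - ∫ x, U x ∂ν‖ ≤ √(A * B) := by
  refine le_of_forall_pos_le_add fun ε hε => ?_
  obtain ⟨V, V_summable, V_coeff_le, V_sub_U⟩ :=
    exists_summable_mFourierCoeff_norm_sub_le U (half_pos hε)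
  have V_le : ‖∫ x, V x ∂μ - ∫ x, V x ∂ν‖ ≤ √(A * B) := by
    refine Real.le_sqrt_of_sq_le
      (sq_norm_integral_sub_integral_le_of_summable V_summable (fun F => ?_) hB)
    refine (Finset.sum_le_sum fun m _ => ?_).trans (hA F)
    gcongr
    exact V_coeff_le m
  have integral_sub_le (ρ : Measure (UnitAddTorus ι)) [IsProbabilityMeasure ρ] :
      ‖∫ x, V x ∂ρ - ∫ x, U x ∂ρ‖ ≤ ε / 2 := by
    rw [← integral_sub (integrable_of_continuous_of_compactSpace V.continuous)
      (integrable_of_continuous_of_compactSpace U.continuous)]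
    simpa using norm_integral_le_of_norm_le_const (ae_of_all ρ V_sub_U)
  calc ‖∫ x, U x ∂μ - ∫ x, U x ∂ν‖
      = ‖(∫ x, V x ∂μ - ∫ x, V x ∂ν) - ((∫ x, V x ∂μ - ∫ x, U x ∂μ) -
          (∫ x, V x ∂ν - ∫ x, U x ∂ν))‖ := by
        congr 1
        ring
    _ ≤ √(A * B) + (ε / 2 + ε / 2) :=
        (norm_sub_le _ _).trans (add_le_add V_le ((norm_sub_le _ _).trans
          (add_le_add (integral_sub_le μ) (integral_sub_le ν))))
    _ = √(A * B) + ε := by rw [add_halves]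

end FourierPairing

lemma mFourierCoeff_comp_add_right (U : UnitAddTorus ι → ℂ) (a : UnitAddTorus ι) (n : ι → ℤ) :
    mFourierCoeff (fun x => U (x + a)) n = mFourier n a * mFourierCoeff U n := by
  have character_shift (x : UnitAddTorus ι) :
      mFourier (-n) x * U (x + a) = mFourier n a * (mFourier (-n) (x + a) * U (x + a)) := by
    have : mFourier n a * mFourier (-n) a = 1 := by
      rw [← mFourier_add, add_neg_cancel, mFourier_zero, ContinuousMap.one_apply]
    rw [mFourier_apply_add]
    linear_combination (-mFourier (-n) x * U (x + a)) * this
  simp only [mFourierCoeff, smul_eq_mul, character_shift, integral_const_mul]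
  rw [integral_add_right_eq_self fun x => mFourier (-n) x * U x]

lemma mFourierCoeff_differenceQuotient {U : UnitAddTorus ι → ℂ} (hU : Integrable U) (c : ℂ)
    (a : UnitAddTorus ι) (n : ι → ℤ) :
    mFourierCoeff (fun x => c * (U (x + a) - U x)) n =
      c * (mFourier n a - 1) * mFourierCoeff U n := by
  calc mFourierCoeff (fun x => c * (U (x + a) - U x)) n
      = c * (mFourierCoeff (fun x => U (x + a)) n - mFourierCoeff U n) := by
        simp only [mFourierCoeff, smul_eq_mul, mul_left_comm _ c, integral_const_mul]
        rw [← integral_sub (integrable_mFourier_mul _ (hU.comp_add_right a))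
          (integrable_mFourier_mul _ hU)]
        simp only [mul_sub]
    _ = c * (mFourier n a - 1) * mFourierCoeff U n := by
        rw [mFourierCoeff_comp_add_right]
        ring

lemma ae_of_ae_toTorus {p : UnitAddTorus ι → Prop} (h : ∀ᵐ x, p (toTorus x)) : ∀ᵐ t, p t := by
  have measurableSet_cube :
      MeasurableSet {x : ι → ℝ | ∀ i, x i ∈ Set.Ioc ((0 : ι → ℝ) i) (0 + 1)} :=
    .univ_pi' fun i => measurableSet_Ioc
  have ae_pi : ∀ᵐ x : ι → ℝ, p fun i => (x i : UnitAddCircle) :=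
    (PiLp.volume_preserving_toLp ι).quasiMeasurePreserving.ae h
  filter_upwards [(measurePreserving_equivPiIoc (0 : ι → ℝ)).quasiMeasurePreserving.ae
    ((ae_restrict_iff_subtype measurableSet_cube).1 (ae_restrict_of_ae ae_pi))] with t ht
  simpa [AddCircle.coe_equivIoc] using ht

section Lipschitz

variable {u : UnitAddTorus ι → ℝ} {L : ℝ≥0}

lemma lipschitzWith_comp_add_toTorus (hu : LipschitzWith L (u ∘ toTorus)) (t : UnitAddTorus ι) :
    LipschitzWith L fun y => u (t + toTorus y) := by
  obtain ⟨x, rfl⟩ := toTorus_surjective t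
  simpa [Function.comp_def, toTorus_add] using hu.comp (isometry_add_left x).lipschitz

lemma abs_torusLineDeriv_le (hu : LipschitzWith L (u ∘ toTorus)) (v : EuclideanSpace ℝ ι)
    (t : UnitAddTorus ι) : |torusLineDeriv u v t| ≤ L * ‖v‖ :=
  norm_lineDeriv_le_of_lipschitz ℝ (lipschitzWith_comp_add_toTorus hu t)

lemma abs_differenceQuotient_le (hu : LipschitzWith L (u ∘ toTorus)) (v : EuclideanSpace ℝ ι)
    (h : ℝ) (t : UnitAddTorus ι) : |h⁻¹ * (u (t + toTorus (h • v)) - u t)| ≤ L * ‖v‖ := by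
  rcases eq_or_ne h 0 with rfl | hh
  · simpa using by positivity
  · have := (lipschitzWith_comp_add_toTorus hu t).norm_sub_le (h • v) 0
    rw [toTorus_zero, add_zero, sub_zero, norm_smul, Real.norm_eq_abs, Real.norm_eq_abs] at this
    rw [abs_mul, abs_inv, inv_mul_le_iff₀ (abs_pos.2 hh)]
    linarith

lemma ae_differentiableAt_comp_add_toTorus (hu : LipschitzWith L (u ∘ toTorus)) :
    ∀ᵐ t, DifferentiableAt ℝ (fun y => u (t + toTorus y)) 0 := by
  refine ae_of_ae_toTorus ?_
  filter_upwards [hu.ae_differentiableAt] with x hx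
  simp only [← toTorus_add]
  exact (differentiableAt_comp_add_left (f := u ∘ toTorus) x).2 (by simpa using hx)

lemma sum_sq_torusLineDeriv_le (hu : LipschitzWith L (u ∘ toTorus))
    (b : OrthonormalBasis ι ℝ (EuclideanSpace ℝ ι)) {t : UnitAddTorus ι}
    (ht : DifferentiableAt ℝ (fun y => u (t + toTorus y)) 0) :
    ∑ j, torusLineDeriv u (b j) t ^ 2 ≤ L ^ 2 := by
  set D := fderiv ℝ (fun y => u (t + toTorus y)) 0
  calc ∑ j, torusLineDeriv u (b j) t ^ 2
      = ∑ j, ‖inner ℝ ((InnerProductSpace.toDual ℝ _).symm D) (b j)‖ ^ 2 := by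
        simp [torusLineDeriv, ht.lineDeriv_eq_fderiv, D]
    _ = ‖D‖ ^ 2 := by rw [b.sum_sq_norm_inner_left, LinearIsometryEquiv.norm_map]
    _ ≤ L ^ 2 := by
        gcongr
        exact norm_fderiv_le_of_lipschitz ℝ (lipschitzWith_comp_add_toTorus hu t)

end Lipschitz

section Energy

variable {u : C(UnitAddTorus ι, ℝ)} {L : ℝ≥0}

lemma tendsto_mFourier_toTorus_smul (n : ι → ℤ) (v : EuclideanSpace ℝ ι) :
    Filter.Tendsto (fun h : ℝ => (h⁻¹ : ℂ) * (mFourier n (toTorus (h • v)) - 1))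
      (nhdsWithin 0 {0}ᶜ) (nhds (2 * π * Complex.I * ∑ i, n i * v i)) := by
  have : HasDerivAt (fun h : ℝ => Complex.exp (2 * π * Complex.I * (∑ i, n i * v i) * h))
      (2 * π * Complex.I * ∑ i, n i * v i) 0 := by
    simpa using! ((Complex.ofRealCLM.hasDerivAt (x := (0 : ℝ))).const_mul
      (2 * π * Complex.I * ∑ i, n i * v i : ℂ)).cexp
  refine this.tendsto_slope_zero.congr fun h => ?_
  simp [mFourier_toTorus, mul_left_comm _ (h : ℂ), mul_comm _ (h : ℂ), Finset.mul_sum]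

lemma mFourierCoeff_torusLineDeriv (hu : LipschitzWith L (u ∘ toTorus)) (v : EuclideanSpace ℝ ι)
    (n : ι → ℤ) :
    mFourierCoeff (fun t => (torusLineDeriv u v t : ℂ)) n =
      2 * π * Complex.I * (∑ i, n i * v i) * mFourierCoeff (fun t => (u t : ℂ)) n := by
  have hasLineDerivAt : ∀ᵐ t, HasLineDerivAt ℝ (fun y => u (t + toTorus y)) (torusLineDeriv u v t)
      0 v :=
    (ae_differentiableAt_comp_add_toTorus hu).mono fun t ht =>
      ht.lineDifferentiableAt.hasLineDerivAt
  have tendsto_coeff : Filter.Tendsto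
      (fun h : ℝ => mFourierCoeff (fun t => (h⁻¹ : ℂ) * (u (t + toTorus (h • v)) - u t)) n)
      (nhdsWithin 0 {0}ᶜ) (nhds (mFourierCoeff (fun t => (torusLineDeriv u v t : ℂ)) n)) := by
    refine tendsto_integral_filter_of_dominated_convergence (fun _ => L * ‖v‖)
      (.of_forall fun h => ?_) (.of_forall fun h => ae_of_all _ fun t => ?_)
      (integrable_const _) ?_
    · exact Continuous.aestronglyMeasurable (by fun_prop)
    · rw [norm_smul, norm_mFourier_apply, one_mul]
      simpa only [← Complex.ofReal_inv, ← Complex.ofReal_sub, ← Complex.ofReal_mul,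
        Complex.norm_real, Real.norm_eq_abs] using abs_differenceQuotient_le hu v h t
    · filter_upwards [hasLineDerivAt] with t ht
      have := (Complex.continuous_ofReal.tendsto _).comp ht.tendsto_slope_zero
      simpa [Function.comp_def, toTorus_zero] using this.const_smul (mFourier (-n) t)
  refine tendsto_nhds_unique tendsto_coeff ?_
  simp only [mFourierCoeff_differenceQuotient (U := fun t => (u t : ℂ))
    (integrable_of_continuous_of_compactSpace (by fun_prop))]
  exact (tendsto_mFourier_toTorus_smul n v).mul_const _

lemma sum_sq_norm_mFourierCoeff_torusLineDeriv_basisFun (hu : LipschitzWith L (u ∘ toTorus))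
    (m : ι → ℤ) :
    ∑ j, ‖mFourierCoeff (fun t => (torusLineDeriv u (EuclideanSpace.basisFun ι ℝ j) t : ℂ)) m‖ ^ 2 =
      (2 * π) ^ 2 * ((∑ i, (m i : ℝ) ^ 2) * ‖mFourierCoeff (fun t => (u t : ℂ)) m‖ ^ 2) := by
  classical
  simp only [mFourierCoeff_torusLineDeriv hu, Finset.sum_mul, Finset.mul_sum]
  refine Finset.sum_congr rfl fun j _ => ?_
  simp [mul_pow, mul_assoc]

theorem sum_sum_sq_mul_sq_norm_mFourierCoeff_le (hu : LipschitzWith L (u ∘ toTorus))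
    (F : Finset (ι → ℤ)) :
    ∑ m ∈ F, (∑ i, (m i : ℝ) ^ 2) * ‖mFourierCoeff (fun t => (u t : ℂ)) m‖ ^ 2 ≤
      (L / (2 * π)) ^ 2 := by
  set b := EuclideanSpace.basisFun ι ℝ
  have memLp (j : ι) : MemLp (fun t => (torusLineDeriv u (b j) t : ℂ)) 2 :=
    .of_bound (Complex.measurable_ofReal.comp
      (measurable_torusLineDeriv u (b j))).aestronglyMeasurable (L * ‖b j‖)
      (ae_of_all _ fun t => by simpa using abs_torusLineDeriv_le hu (b j) t)
  have energy_le : ∑ j, ∫ t, ‖(torusLineDeriv u (b j) t : ℂ)‖ ^ 2 ≤ L ^ 2 := by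
    rw [← integral_finsetSum _ fun j _ => (memLp j).integrable_norm_pow two_ne_zero]
    refine (integral_mono_of_nonneg (ae_of_all _ fun t => by positivity)
      (integrable_const (L ^ 2 : ℝ)) ?_).trans_eq (by simp)
    filter_upwards [ae_differentiableAt_comp_add_toTorus hu] with t ht
    simpa using sum_sq_torusLineDeriv_le hu b ht
  rw [div_pow, le_div_iff₀' (by positivity), Finset.mul_sum]
  calc ∑ m ∈ F, (2 * π) ^ 2 *
        ((∑ i, (m i : ℝ) ^ 2) * ‖mFourierCoeff (fun t => (u t : ℂ)) m‖ ^ 2)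
      = ∑ j, ∑ m ∈ F, ‖mFourierCoeff (fun t => (torusLineDeriv u (b j) t : ℂ)) m‖ ^ 2 := by
        rw [Finset.sum_comm]
        simp only [b, sum_sq_norm_mFourierCoeff_torusLineDeriv_basisFun hu]
    _ ≤ ∑ j, ∫ t, ‖(torusLineDeriv u (b j) t : ℂ)‖ ^ 2 :=
        Finset.sum_le_sum fun j _ => sum_le_hasSum F (fun m _ => by positivity)
          (hasSum_sq_mFourierCoeff_of_memLp (memLp j))
    _ ≤ L ^ 2 := energy_le

end Energy

section Cube

variable {d : ℕ} {μ ν : Measure (Fin d → ℝ)}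

lemma torusFourierStieltjes_map_angleToTorus (μ : Measure (Fin d → ℝ)) (m : Fin d → ℤ) :
    torusFourierStieltjes (μ.map angleToTorus) m = fourierStieltjes μ m := by
  rw [torusFourierStieltjes, integral_map continuous_angleToTorus.aemeasurable
    (mFourier m).continuous.aestronglyMeasurable]
  simp only [fourierStieltjes, angleToTorus, mFourier_toTorus]
  congr! 3 with x
  simp only [Finset.mul_sum, Pi.smul_apply, smul_eq_mul, Complex.ofReal_mul, Complex.ofReal_inv,
    Complex.ofReal_ofNat]
  refine Finset.sum_congr rfl fun i _ => ?_
  have : (π : ℂ) ≠ 0 := Complex.ofReal_ne_zero.2 pi_ne_zero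
  field_simp

theorem integral_sub_integral_le_sqrt_of_lipschitzWith_one [IsProbabilityMeasure μ]
    [IsProbabilityMeasure ν]
    (hμ : ∀ᵐ x ∂μ, ∀ i, x i ∈ Set.Icc 0 π) (hν : ∀ᵐ x ∂ν, ∀ i, x i ∈ Set.Icc 0 π) {B : ℝ}
    (hB : ∀ F : Finset (Fin d → ℤ),
      ∑ m ∈ F, ‖fourierStieltjes μ m - fourierStieltjes ν m‖ ^ 2 / ∑ i, (m i : ℝ) ^ 2 ≤ B)
    {f : EuclideanSpace ℝ (Fin d) → ℝ} (hf : LipschitzWith 1 f) :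
    ∫ x, f (WithLp.toLp 2 x) ∂μ - ∫ x, f (WithLp.toLp 2 x) ∂ν ≤ √B := by
  have := Measure.isProbabilityMeasure_map (μ := μ) continuous_angleToTorus.aemeasurable
  have := Measure.isProbabilityMeasure_map (μ := ν) continuous_angleToTorus.aemeasurable
  let u : C(UnitAddTorus (Fin d), ℝ) := ⟨f ∘ foldTorus, hf.continuous.comp continuous_foldTorus⟩
  have energy_le (F : Finset (Fin d → ℤ)) :
      ∑ m ∈ F, (∑ i, (m i : ℝ) ^ 2) * ‖mFourierCoeff (fun t => (u t : ℂ)) m‖ ^ 2 ≤ 1 := by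
    have := sum_sum_sq_mul_sq_norm_mFourierCoeff_le (u := u)
      (hf.comp lipschitzWith_foldTorus_comp_toTorus) F
    simpa [pi_ne_zero] using this
  have := norm_integral_sub_integral_le_sqrt (μ := μ.map angleToTorus) (ν := ν.map angleToTorus)
    ⟨fun t => (u t : ℂ), by fun_prop⟩ energy_le
    (by simpa only [torusFourierStieltjes_map_angleToTorus] using hB)
  rw [integral_comp_toLp_eq_integral_map_angleToTorus hf.continuous hμ,
    integral_comp_toLp_eq_integral_map_angleToTorus hf.continuous hν]
  simp only [ContinuousMap.coe_mk, integral_complex_ofReal, ← Complex.ofReal_sub, one_mul,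
    Complex.norm_real] at this
  exact (le_abs_self _).trans this

end Cube

end Torus

lemma ofReal_euclidDist_ofLp {d : ℕ} (x y : EuclideanSpace ℝ (Fin d)) :
    ENNReal.ofReal (euclidDist x.ofLp y.ofLp) = edist x y := by
  rw [edist_dist, EuclideanSpace.dist_eq]
  simp only [euclidDist, Real.dist_eq, sq_abs]

theorem W1_le_of_forall_lipschitzWith_one {d : ℕ} {μ ν : Measure (Fin d → ℝ)}
    [IsProbabilityMeasure μ] [IsProbabilityMeasure ν] {K : Set (Fin d → ℝ)} (hK : IsCompact K)
    (hμ : μ Kᶜ = 0) (hν : ν Kᶜ = 0) {C : ℝ}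
    (hC : ∀ f : EuclideanSpace ℝ (Fin d) → ℝ, LipschitzWith 1 f →
      ∫ x, f (WithLp.toLp 2 x) ∂μ - ∫ x, f (WithLp.toLp 2 x) ∂ν ≤ C) :
    W1 μ ν ≤ ENNReal.ofReal C := by
  let e : (Fin d → ℝ) ≃ᵐ EuclideanSpace ℝ (Fin d) := .toLp 2 _
  have := Measure.isProbabilityMeasure_map (μ := μ) e.measurable.aemeasurable
  have := Measure.isProbabilityMeasure_map (μ := ν) e.measurable.aemeasurable
  have null_compl {ρ : Measure (Fin d → ℝ)} (hρ : ρ Kᶜ = 0) : ρ.map e (e '' K)ᶜ = 0 := by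
    rwa [e.map_apply, Set.preimage_compl, e.injective.preimage_image]
  obtain ⟨γ, coupling, cost⟩ := kantorovich_rubinstein (μ := μ.map e) (ν := ν.map e) (C := C)
    (hK.image (PiLp.continuous_toLp 2 _)) (null_compl hμ) (null_compl hν) fun f hf => by
      simpa only [e.measurableEmbedding.integral_map] using! hC f hf
  refine (iInf₂_le (γ.map (Prod.map e.symm e.symm)) ?_).trans ?_
  · simpa using coupling.map e.symm.measurable
  · calc ∫⁻ z, ENNReal.ofReal (euclidDist z.1 z.2) ∂γ.map (Prod.map e.symm e.symm)
        ≤ ∫⁻ z, ENNReal.ofReal (euclidDist (e.symm z.1) (e.symm z.2)) ∂γ := lintegral_map_le _ _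
      _ = ∫⁻ z, edist z.1 z.2 ∂γ := lintegral_congr fun z => ofReal_euclidDist_ofLp z.1 z.2
      _ ≤ ENNReal.ofReal C := cost

lemma sq_le_tsum_ofReal_of_forall_sum_le {α : Type*} {g : α → ℝ} (hg : ∀ a, 0 ≤ g a) {x : ℝ≥0∞}
    (h : ∀ B : ℝ, (∀ F : Finset α, ∑ a ∈ F, g a ≤ B) → x ≤ ENNReal.ofReal √B) :
    x ^ 2 ≤ ∑' a, ENNReal.ofReal (g a) := by
  rcases eq_or_ne (∑' a, ENNReal.ofReal (g a)) ∞ with hS | hS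
  · simp [hS]
  have sum_le (F : Finset α) : ∑ a ∈ F, g a ≤ (∑' a, ENNReal.ofReal (g a)).toReal := by
    rw [← ENNReal.ofReal_le_iff_le_toReal hS, ENNReal.ofReal_sum_of_nonneg fun a _ => hg a]
    exact ENNReal.sum_le_tsum F
  calc x ^ 2 ≤ ENNReal.ofReal √(∑' a, ENNReal.ofReal (g a)).toReal ^ 2 := by
        gcongr
        exact h _ sum_le
    _ = ∑' a, ENNReal.ofReal (g a) := by
        rw [← ENNReal.ofReal_pow (sqrt_nonneg _), sq_sqrt toReal_nonneg, ENNReal.ofReal_toReal hS]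

/-- Lemma 1 (cube version): for probability measures supported on `[0,π]^d`,
`W₁(μ,ν)² ≤ Σ_{m ≠ 0} |f_μ(m) − f_ν(m)|² / |m|²`. -/
theorem W1_sq_le_fourier_sum {d : ℕ}
    (μ ν : Measure (Fin d → ℝ)) [IsProbabilityMeasure μ] [IsProbabilityMeasure ν]
    (hμ : μ {x | ¬ ∀ i, x i ∈ Set.Icc (0 : ℝ) π} = 0)
    (hν : ν {x | ¬ ∀ i, x i ∈ Set.Icc (0 : ℝ) π} = 0) :
    W1 μ ν ^ 2 ≤
      ∑' m : {m : Fin d → ℤ // m ≠ 0},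
        ENNReal.ofReal
          (‖fourierStieltjes μ m - fourierStieltjes ν m‖ ^ 2 / ∑ i, ((m.1 i : ℝ)) ^ 2) := by
  have isCompact_cube : IsCompact {x : Fin d → ℝ | ∀ i, x i ∈ Set.Icc 0 π} :=
    isCompact_pi_infinite fun _ => isCompact_Icc
  have W1_le (B : ℝ) (hB : ∀ F : Finset (Fin d → ℤ),
      ∑ m ∈ F, ‖fourierStieltjes μ m - fourierStieltjes ν m‖ ^ 2 / ∑ i, (m i : ℝ) ^ 2 ≤ B) :
      W1 μ ν ≤ ENNReal.ofReal √B :=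
    W1_le_of_forall_lipschitzWith_one isCompact_cube hμ hν fun _ hf =>
      integral_sub_integral_le_sqrt_of_lipschitzWith_one hμ hν hB hf
  refine (sq_le_tsum_ofReal_of_forall_sum_le (fun m => by positivity) W1_le).trans_eq ?_
  refine (tsum_subtype_eq_of_support_subset (s := {m : Fin d → ℤ | m ≠ 0})
    (f := fun m => ENNReal.ofReal
      (‖fourierStieltjes μ m - fourierStieltjes ν m‖ ^ 2 / ∑ i, (m i : ℝ) ^ 2)) fun m hm => ?_).symm
  rintro rfl
  simp at hm
end
end

section
/- For every t > 0, the heat kernel measure γ_t on Q^d satisfies ∫_{Q^d} |y|² p_t(y) dy ≤ 2dt, where |·| is the Euclidean norm on ℝ^d. -/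
open MeasureTheory Real

noncomputable section

/-!
A coordinate of the heat kernel measure is a centred Gaussian of variance `2t` wrapped
around the circle `ℝ / 2πℤ`: at integers both have the characteristic function `n ↦ e^{-n²t}`, and
Fourier coefficients determine a finite measure on the circle. Wrapping never increases the distance
to `0`, and does not change it on `(-π, π]`, so the second moment of the coordinate is at most that
of the Gaussian.
-/

open ProbabilityTheory
open scoped NNReal ENNReal

theorem integral_eq_of_mem_span {X 𝕜 : Type*} [TopologicalSpace X] [CompactSpace X]
    [MeasurableSpace X] [OpensMeasurableSpace X] [RCLike 𝕜] {μ ν : Measure X}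
    [IsFiniteMeasure μ] [IsFiniteMeasure ν] {s : Set C(X, 𝕜)}
    (h : ∀ f ∈ s, ∫ x, f x ∂μ = ∫ x, f x ∂ν) {f : C(X, 𝕜)} (hf : f ∈ Submodule.span 𝕜 s) :
    ∫ x, f x ∂μ = ∫ x, f x ∂ν := by
  have integrable (ρ : Measure X) [IsFiniteMeasure ρ] (g : C(X, 𝕜)) : Integrable g ρ :=
    g.continuous.integrable_of_hasCompactSupport (HasCompactSupport.of_compactSpace g)
  induction hf using Submodule.span_induction with
  | mem g hg => exact h g hg
  | zero => simp
  | add f g _ _ hf hg =>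
    simp only [ContinuousMap.add_apply]
    rw [integral_add (integrable μ f) (integrable μ g),
      integral_add (integrable ν f) (integrable ν g), hf, hg]
  | smul c f _ hf =>
    simp only [ContinuousMap.smul_apply]
    rw [integral_smul, integral_smul, hf]

section Circle

variable {T : ℝ}

theorem integral_fourier_map_coe (μ : Measure ℝ) (n : ℤ) :
    ∫ x, fourier n x ∂μ.map ((↑) : ℝ → AddCircle T) = charFun μ (2 * π * n / T) := by
  rw [integral_map AddCircle.measurable_mk'.aemeasurable
    (fourier n).continuous.aestronglyMeasurable, charFun_apply_real]
  refine integral_congr_ae (.of_forall fun x => ?_)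
  simp only [fourier_coe_apply]
  congr 1
  push_cast
  ring

theorem eLpNorm_id_map_coe_addCircle (p : ℝ≥0∞) (μ : Measure ℝ) :
    eLpNorm id p (μ.map ((↑) : ℝ → AddCircle T)) = eLpNorm ((↑) : ℝ → AddCircle T) p μ :=
  eLpNorm_map_measure aestronglyMeasurable_id AddCircle.measurable_mk'.aemeasurable

variable [Fact (0 < T)]

theorem measure_addCircle_ext_of_integral_fourier {μ ν : Measure (AddCircle T)}
    [IsFiniteMeasure μ] [IsFiniteMeasure ν]
    (h : ∀ n : ℤ, ∫ x, fourier n x ∂μ = ∫ x, fourier n x ∂ν) : μ = ν := by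
  let toContinuousMap :=
    BoundedContinuousFunction.toContinuousMapStarₐ (α := AddCircle T) (β := ℂ) ℂ
  refine ext_of_forall_mem_subalgebra_integral_eq_of_pseudoEMetric_complete_countable
    (A := fourierSubalgebra.comap toContinuousMap) ?_ fun g hg => ?_
  · intro x y hxy
    obtain ⟨_, ⟨f, hf, rfl⟩, hfxy⟩ := fourierSubalgebra_separatesPoints hxy
    exact ⟨f, ⟨f, ⟨BoundedContinuousFunction.mkOfCompact f, hf, rfl⟩, rfl⟩, hfxy⟩
  · have mem_span : toContinuousMap g ∈ Submodule.span ℂ (Set.range fourier) := by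
      rw [← fourierSubalgebra_coe]
      exact hg
    exact integral_eq_of_mem_span (Set.forall_mem_range.2 h) mem_span

theorem map_coe_addCircle_eq_of_charFun_eq {μ ν : Measure ℝ} [IsFiniteMeasure μ]
    [IsFiniteMeasure ν]
    (h : ∀ n : ℤ, charFun μ (2 * π * n / T) = charFun ν (2 * π * n / T)) :
    μ.map ((↑) : ℝ → AddCircle T) = ν.map (↑) :=
  measure_addCircle_ext_of_integral_fourier fun n => by
    rw [integral_fourier_map_coe, integral_fourier_map_coe, h n]

theorem eLpNorm_id_le_of_charFun_eq (p : ℝ≥0∞) {μ ν : Measure ℝ} [IsFiniteMeasure μ]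
    [IsFiniteMeasure ν] (hμ : ∀ᵐ x ∂μ, |x| ≤ T / 2)
    (h : ∀ n : ℤ, charFun μ (2 * π * n / T) = charFun ν (2 * π * n / T)) :
    eLpNorm id p μ ≤ eLpNorm id p ν := by
  have hT : 0 < T := Fact.out
  calc eLpNorm id p μ
      = eLpNorm ((↑) : ℝ → AddCircle T) p μ := by
        refine eLpNorm_congr_norm_ae (hμ.mono fun x hx => ?_)
        rw [(AddCircle.norm_coe_eq_abs_iff T hT.ne').2 (by rwa [abs_of_pos hT])]
        rfl
    _ = eLpNorm ((↑) : ℝ → AddCircle T) p ν := by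
        rw [← eLpNorm_id_map_coe_addCircle, map_coe_addCircle_eq_of_charFun_eq h,
          eLpNorm_id_map_coe_addCircle]
    _ ≤ eLpNorm id p ν := eLpNorm_mono fun x => QuotientAddGroup.norm_mk_le_norm

end Circle

theorem integral_sq_le_integral_sq_of_eLpNorm_le {α β : Type*} [MeasurableSpace α]
    [MeasurableSpace β] {μ : Measure α} {ν : Measure β} {f : α → ℝ} {g : β → ℝ}
    (hf : AEStronglyMeasurable f μ) (hg : MemLp g 2 ν) (h : eLpNorm f 2 μ ≤ eLpNorm g 2 ν) :
    ∫ x, f x ^ 2 ∂μ ≤ ∫ x, g x ^ 2 ∂ν := by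
  have hf : MemLp f 2 μ := ⟨hf, h.trans_lt hg.eLpNorm_lt_top⟩
  rw [hf.eLpNorm_eq_integral_rpow_norm two_ne_zero ENNReal.ofNat_ne_top,
    hg.eLpNorm_eq_integral_rpow_norm two_ne_zero ENNReal.ofNat_ne_top,
    ENNReal.ofReal_le_ofReal_iff (by positivity),
    Real.rpow_le_rpow_iff (by positivity) (by positivity) (by simp)] at h
  simpa using h

theorem integral_sq_gaussianReal (m : ℝ) (v : ℝ≥0) :
    ∫ x, x ^ 2 ∂gaussianReal m v = v + m ^ 2 := by
  have h := variance_eq_sub (memLp_id_gaussianReal (μ := m) (v := v) 2)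
  rw [variance_id_gaussianReal] at h
  simp only [Pi.pow_apply, id_eq, integral_id_gaussianReal] at h
  linarith

theorem integral_sq_le_of_charFun_int_eq_exp {μ : Measure ℝ} [IsFiniteMeasure μ] {t : ℝ}
    (ht : 0 ≤ t) (hμ : ∀ᵐ x ∂μ, |x| ≤ π)
    (h : ∀ n : ℤ, charFun μ n = Complex.exp (-(n ^ 2 * t))) :
    ∫ x, x ^ 2 ∂μ ≤ 2 * t := by
  obtain ⟨v, hv⟩ : ∃ v : ℝ≥0, (v : ℝ) = 2 * t := ⟨⟨2 * t, by positivity⟩, rfl⟩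
  have : Fact (0 < 2 * π) := ⟨two_pi_pos⟩
  have charFun_eq (n : ℤ) :
      charFun μ (2 * π * n / (2 * π)) = charFun (gaussianReal 0 v) (2 * π * n / (2 * π)) := by
    rw [mul_div_cancel_left₀ _ two_pi_pos.ne', h, charFun_gaussianReal]
    congr 1
    simp only [hv]
    push_cast
    ring
  calc ∫ x, x ^ 2 ∂μ
      ≤ ∫ x, x ^ 2 ∂gaussianReal 0 v :=
        integral_sq_le_integral_sq_of_eLpNorm_le aestronglyMeasurable_id (memLp_id_gaussianReal 2)
          (eLpNorm_id_le_of_charFun_eq 2 (by simpa using hμ) charFun_eq)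
    _ = 2 * t := by simp [integral_sq_gaussianReal, hv]

section Coordinate

variable {d : ℕ}

theorem fourierStieltjes_single (μ : Measure (Fin d → ℝ)) (i : Fin d) (n : ℤ) :
    fourierStieltjes μ (Pi.single i n) = charFun (μ.map fun x => x i) (n : ℝ) := by
  rw [charFun_apply_real, integral_map (measurable_pi_apply i).aemeasurable (by fun_prop)]
  refine integral_congr_ae (.of_forall fun x => ?_)
  simp [Pi.single_apply, mul_comm]

theorem abs_le_pi_of_mem_Qcube {x : Fin d → ℝ} (hx : x ∈ Qcube d) (i : Fin d) : |x i| ≤ π :=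
  abs_le.2 ⟨(hx i).1.le, (hx i).2⟩

theorem integral_sq_coord_le_of_fourierStieltjes_single_eq_exp {t : ℝ} (ht : 0 ≤ t)
    {γ : Measure (Fin d → ℝ)} [IsFiniteMeasure γ] {i : Fin d} (hγ : ∀ᵐ y ∂γ, |y i| ≤ π)
    (hft : ∀ n : ℤ, fourierStieltjes γ (Pi.single i n) = Complex.exp (-(n ^ 2 * t))) :
    ∫ y, y i ^ 2 ∂γ ≤ 2 * t := by
  rw [← integral_map (φ := fun y : Fin d → ℝ => y i) (f := fun x : ℝ => x ^ 2)
    (measurable_pi_apply i).aemeasurable (by fun_prop)]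
  refine integral_sq_le_of_charFun_int_eq_exp ht ?_ fun n => ?_
  · exact (ae_map_iff (measurable_pi_apply i).aemeasurable
      (measurableSet_le measurable_norm measurable_const)).2 hγ
  · rw [← fourierStieltjes_single, hft]

end Coordinate

/-- The second moment of the heat kernel measure `γ_t` on `Q^d` (the probability
measure on `Q^d` characterized by `f_{γ_t}(m) = e^{−|m|²t}`) is at most `2dt`. -/
theorem heat_kernel_second_moment {d : ℕ} {t : ℝ} (ht : 0 < t)
    (γ : Measure (Fin d → ℝ)) [IsProbabilityMeasure γ] (hsupp : γ (Qcube d)ᶜ = 0)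
    (hft : ∀ m : Fin d → ℤ,
      fourierStieltjes γ m = Complex.exp (-((∑ i, ((m i : ℝ)) ^ 2) * t))) :
    ∫ y, (∑ i, y i ^ 2) ∂γ ≤ 2 * d * t := by
  have abs_le_pi (i : Fin d) : ∀ᵐ y ∂γ, |y i| ≤ π :=
    (show ∀ᵐ y ∂γ, y ∈ Qcube d from hsupp).mono fun y hy => abs_le_pi_of_mem_Qcube hy i
  have integrable_sq (i : Fin d) : Integrable (fun y => y i ^ 2) γ :=
    (MemLp.of_bound (measurable_pi_apply i).aestronglyMeasurable π (abs_le_pi i)).integrable_sq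
  have coord_le (i : Fin d) : ∫ y, y i ^ 2 ∂γ ≤ 2 * t :=
    integral_sq_coord_le_of_fourierStieltjes_single_eq_exp ht.le (abs_le_pi i) fun n => by
      simp [hft, Pi.single_apply]
  calc ∫ y, ∑ i, y i ^ 2 ∂γ
      = ∑ i, ∫ y, y i ^ 2 ∂γ := integral_finsetSum _ fun i _ => integrable_sq i
    _ ≤ ∑ _i : Fin d, 2 * t := Finset.sum_le_sum fun i _ => coord_le i
    _ = 2 * d * t := by
      rw [Finset.sum_const, Finset.card_univ, Fintype.card_fin, nsmul_eq_mul]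
      ring
end
end
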